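/- arXiv:math/0608252 — 2 statements merged into one kernel-verified Lean document; each statement's English description precedes it below -/
import Mathlib

section
/- If p and q are strictly positive probability vectors on finite alphabets with H(p) > H(q), then there exists a finitary homomorphism from the Bernoulli scheme BS(p) to the Bernoulli scheme BS(q) whose code length has finite expectation. -/
open MeasureTheory ENNReal Filter

noncomputable section

/-- The left shift transformation on bi-infinite sequences: `(shift x) n = x (n+1)`. -/
def shift {A : Type*} : (ℤ → A) → (ℤ → A) := fun x n => x (n + 1)

/-- `φ` is a homomorphism (factor map) from the shift system `(ℤ → A, μ, shift)` to
`(ℤ → B, ν, shift)`, defined on the shift-invariant full-measure domain `D`. -/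
structure IsFactorMap {A B : Type*} [MeasurableSpace A] [MeasurableSpace B]
    (μ : Measure (ℤ → A)) (ν : Measure (ℤ → B))
    (D : Set (ℤ → A)) (φ : (ℤ → A) → (ℤ → B)) : Prop where
  measurable_map : Measurable φ
  dom_measurable : MeasurableSet D
  dom_shift_invariant : shift ⁻¹' D = D
  dom_full : μ D = 1
  pushforward : ν = μ.map φ
  equivariant : ∀ x ∈ D, φ (shift x) = shift (φ x)

/-- The window `[-q, r]` of `x` determines the zero coordinate of the image under `φ`
(among points of the domain `D`). -/
def DeterminesAt {A B : Type*} (D : Set (ℤ → A)) (φ : (ℤ → A) → (ℤ → B))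
    (q r : ℕ) (x : ℤ → A) : Prop :=
  ∀ y ∈ D, (∀ i : ℤ, -(q : ℤ) ≤ i → i ≤ (r : ℤ) → y i = x i) → φ y 0 = φ x 0

/-- A homomorphism `φ` with domain `D` is finitary if for almost every `x` in the domain
there are nonnegative integers `q`, `r` such that the coordinates `x_{-q}, …, x_r`
determine `(φ x)_0`. -/
def IsFinitary {A B : Type*} [MeasurableSpace A] [MeasurableSpace B]
    (μ : Measure (ℤ → A)) (D : Set (ℤ → A)) (φ : (ℤ → A) → (ℤ → B)) : Prop :=
  ∀ᵐ x ∂μ, x ∈ D → ∃ q r : ℕ, DeterminesAt D φ q r x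

/-- The code length `C(x) = q(x) + r(x)` with `q(x), r(x)` minimal such that the window
`[-q(x), r(x)]` determines the zero output coordinate (`⊤` if no finite window works). -/
def codeLength {A B : Type*} (D : Set (ℤ → A)) (φ : (ℤ → A) → (ℤ → B))
    (x : ℤ → A) : ℝ≥0∞ :=
  ⨅ (q : ℕ) (r : ℕ) (_ : DeterminesAt D φ q r x), ((q : ℝ≥0∞) + (r : ℝ≥0∞))

/-- `μ` is the Bernoulli (product) measure on `(ℤ → A)` given by the probability vector `p`. -/
def IsBernoulliMeasure {A : Type*} [MeasurableSpace A] (μ : Measure (ℤ → A)) (p : A → ℝ) : Prop :=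
  ∀ (F : Finset ℤ) (s : ℤ → A),
    μ {x | ∀ i ∈ F, x i = s i} = ENNReal.ofReal (∏ i ∈ F, p (s i))

/-- A strictly positive probability vector on a finite alphabet. -/
def IsProbVector {A : Type*} [Fintype A] (p : A → ℝ) : Prop :=
  (∀ i, 0 < p i) ∧ ∑ i, p i = 1

/-- The entropy `H(p) = -∑ p_i log p_i` of a probability vector. -/
def vecEntropy {A : Type*} [Fintype A] (p : A → ℝ) : ℝ := -∑ i, p i * Real.log (p i)

/-- A finitary isomorphism: a pair of mutually inverse finitary factor maps. -/
def IsFinitaryIsomorphism {A B : Type*} [MeasurableSpace A] [MeasurableSpace B]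
    (μ : Measure (ℤ → A)) (ν : Measure (ℤ → B))
    (D : Set (ℤ → A)) (E : Set (ℤ → B))
    (φ : (ℤ → A) → (ℤ → B)) (ψ : (ℤ → B) → (ℤ → A)) : Prop :=
  IsFactorMap μ ν D φ ∧ IsFactorMap ν μ E ψ ∧
  IsFinitary μ D φ ∧ IsFinitary ν E ψ ∧
  (∀ x ∈ D, φ x ∈ E ∧ ψ (φ x) = x) ∧ (∀ y ∈ E, ψ y ∈ D ∧ φ (ψ y) = y)

section Simulation

variable {A T : Type*} [Fintype A] [Fintype T] [DecidableEq T]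

/-- A sequential procedure reading letters of law `p`, one at a time. After the word `w` has been
read, `law w` is the conditional law of the result, `out w` is the result once it is known, and
`pot w` bounds the expected number of letters still to be read. -/
structure IsSimulator (p : A → ℝ) (law : List A → T → ℝ) (pot : List A → ℝ)
    (out : List A → Option T) : Prop where
  law_nonneg : ∀ w y, 0 ≤ law w y
  law_sum : ∀ w, ∑ y, law w y = 1
  law_step : ∀ w, out w = none → ∀ y, ∑ a, p a * law (w ++ [a]) y = law w y
  law_done : ∀ w y, out w = some y → law w = Pi.single y 1
  pot_nonneg : ∀ w, 0 ≤ pot w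
  pot_step : ∀ w, out w = none → ∑ a, p a * pot (w ++ [a]) + 1 ≤ pot w

/-- The law `r` can be simulated from letters of law `p` with at most `c` letters on average. -/
def SimulableWithin (p : A → ℝ) (r : T → ℝ) (c : ℝ) : Prop :=
  ∃ law pot out, IsSimulator p law pot out ∧ law [] = r ∧ pot [] ≤ c

theorem simulableWithin_single (p : A → ℝ) (y : T) : SimulableWithin p (Pi.single y 1) 0 := by
  refine ⟨fun _ => Pi.single y 1, fun _ => 0, fun _ => some y, ?_, rfl, le_rfl⟩
  constructor
  · intro w z
    by_cases h : z = y <;> simp [h]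
  · simp
  · simp
  · rintro w z ⟨⟩
    rfl
  · simp
  · simp

theorem SimulableWithin.cons {p : A → ℝ} (hp : IsProbVector p) {r : A → T → ℝ} {c : A → ℝ}
    (h : ∀ a, SimulableWithin p (r a) (c a)) :
    SimulableWithin p (fun y => ∑ a, p a * r a y) (∑ a, p a * c a + 1) := by
  choose law pot out hsim hlaw hpot using h
  refine ⟨fun | [] => fun y => ∑ a, p a * r a y | a :: w => law a w,
    fun | [] => ∑ a, p a * c a + 1 | a :: w => pot a w,
    fun | [] => none | a :: w => out a w, ?_, rfl, le_rfl⟩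
  have hr : ∀ a, ∑ y, r a y = 1 := fun a => by rw [← hlaw a]; exact (hsim a).law_sum []
  have hr0 : ∀ a y, 0 ≤ r a y := fun a y => by rw [← hlaw a]; exact (hsim a).law_nonneg [] y
  have hc : ∀ a, 0 ≤ c a := fun a => ((hsim a).pot_nonneg []).trans (hpot a)
  constructor
  · rintro (_ | ⟨a, w⟩) y
    · exact Finset.sum_nonneg fun a _ => mul_nonneg (hp.1 a).le (hr0 a y)
    · exact (hsim a).law_nonneg w y
  · rintro (_ | ⟨a, w⟩)
    · rw [Finset.sum_comm]
      simp [← Finset.mul_sum, hr, hp.2]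
    · exact (hsim a).law_sum w
  · rintro (_ | ⟨a, w⟩) hw y
    · simp [hlaw]
    · exact (hsim a).law_step w hw y
  · rintro (_ | ⟨a, w⟩) y hw
    · simp at hw
    · exact (hsim a).law_done w y hw
  · rintro (_ | ⟨a, w⟩)
    · have := Finset.sum_nonneg fun a (_ : a ∈ Finset.univ) => mul_nonneg (hp.1 a).le (hc a)
      dsimp only
      linarith
    · exact (hsim a).pot_nonneg w
  · rintro (_ | ⟨a, w⟩) hw
    · simp only [List.nil_append, add_le_add_iff_right]
      exact Finset.sum_le_sum fun a _ => mul_le_mul_of_nonneg_left (hpot a) (hp.1 a).le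
    · exact (hsim a).pot_step w hw

theorem SimulableWithin.words {p : A → ℝ} (hp : IsProbVector p) :
    ∀ {n : ℕ} {r : (Fin n → A) → T → ℝ} {c : (Fin n → A) → ℝ},
      (∀ u, SimulableWithin p (r u) (c u)) →
      SimulableWithin p (fun y => ∑ u, (∏ i, p (u i)) * r u y)
        (∑ u, (∏ i, p (u i)) * c u + n)
  | 0, r, c, h => by
    simpa using h default
  | n + 1, r, c, h => by
    have key := SimulableWithin.cons hp fun a =>
      SimulableWithin.words hp (n := n) (r := fun v => r (Fin.cons a v))
        (c := fun v => c (Fin.cons a v)) fun v => h _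
    have hs : ∀ f : (Fin (n + 1) → A) → ℝ, ∑ u, (∏ i, p (u i)) * f u =
        ∑ a, p a * ∑ v : Fin n → A, (∏ i, p (v i)) * f (Fin.cons a v) := by
      intro f
      rw [← (Fin.consEquiv fun _ => A).sum_comp, Fintype.sum_prod_type]
      simp [Fin.consEquiv, Fin.prod_univ_succ, Finset.mul_sum, mul_assoc]
    simp only [hs]
    convert key using 1
    simp only [mul_add, Finset.sum_add_distrib, ← Finset.sum_mul, hp.2]
    push_cast
    ring

/-- The number of points carrying mass. -/
def suppCard (r : T → ℝ) : ℕ := (Finset.univ.filter fun y => r y ≠ 0).card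

theorem exists_split_on {Y : Type*} [DecidableEq Y] (r : Y → ℝ) (hr : ∀ y, 0 ≤ r y)
    (S : Finset Y) : ∀ c, 0 ≤ c → c ≤ ∑ y ∈ S, r y → ∃ r₁ : Y → ℝ,
      (∀ y, 0 ≤ r₁ y) ∧ (∀ y, r₁ y ≤ r y) ∧ ∑ y ∈ S, r₁ y = c ∧
      (S.filter fun y => r₁ y ≠ 0).card + (S.filter fun y => r y - r₁ y ≠ 0).card ≤
        (S.filter fun y => r y ≠ 0).card + 1 ∧ ∀ y ∉ S, r₁ y = 0 := by
  induction S using Finset.induction_on with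
  | empty =>
    intro c h0 h1
    exact ⟨0, by simp, by simpa using hr, by simp at h1 ⊢; linarith, by simp, by simp⟩
  | insert t S ht ih =>
    intro c h0 h1
    rw [Finset.sum_insert ht] at h1
    by_cases hc : c ≤ ∑ y ∈ S, r y
    · obtain ⟨r₁, h2, h3, h4, h5, h6⟩ := ih c h0 hc
      refine ⟨r₁, h2, h3, ?_, ?_, fun y hy => h6 y fun h => hy (Finset.mem_insert_of_mem h)⟩
      · rw [Finset.sum_insert ht, h6 t ht, h4, zero_add]
      · rw [Finset.filter_insert, Finset.filter_insert, Finset.filter_insert, h6 t ht]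
        by_cases h : r t = 0
        · simpa [h] using h5
        · simp only [ne_eq, not_true_eq_false, if_false, sub_zero, h, not_false_eq_true, if_true]
          rw [Finset.card_insert_of_notMem (by simp [ht]),
            Finset.card_insert_of_notMem (by simp [ht])]
          simp only [ne_eq] at h5
          omega
    · push Not at hc
      classical
      refine ⟨fun y => if y ∈ S then r y else if y = t then c - ∑ y ∈ S, r y else 0,
        ?_, ?_, ?_, ?_, ?_⟩
      · intro y
        dsimp only
        split_ifs
        · exact hr y
        · linarith
        · exact le_rfl
      · intro y
        dsimp only
        split_ifs with h h'
        · exact le_rfl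
        · subst h'; linarith
        · exact hr y
      · rw [Finset.sum_insert ht, Finset.sum_congr rfl fun y hy => if_pos hy]
        simp [ht]
      · have e1 : ((insert t S).filter fun y => (if y ∈ S then r y else
            if y = t then c - ∑ y ∈ S, r y else 0) ≠ 0).card ≤
            (S.filter fun y => r y ≠ 0).card + 1 := by
          refine (Finset.card_le_card (t := insert t (S.filter fun y => r y ≠ 0)) ?_).trans
            (Finset.card_insert_le _ _)
          intro y hy
          simp only [Finset.mem_filter, Finset.mem_insert] at hy ⊢
          rcases hy with ⟨rfl | h, hy⟩
          · exact Or.inl rfl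
          · simp only [h, if_true] at hy
            exact Or.inr ⟨h, hy⟩
        have e2 : ((insert t S).filter fun y => r y - (if y ∈ S then r y else
            if y = t then c - ∑ y ∈ S, r y else 0) ≠ 0).card ≤ 1 := by
          rw [← Finset.card_singleton t]
          refine Finset.card_le_card ?_
          intro y hy
          simp only [Finset.mem_filter, Finset.mem_insert, Finset.mem_singleton] at hy ⊢
          rcases hy with ⟨rfl | h, hy⟩
          · rfl
          · simp [h] at hy
        have e3 : ((insert t S).filter fun y => r y ≠ 0).card =
            (S.filter fun y => r y ≠ 0).card + 1 := by
          rw [Finset.filter_insert, if_pos (by linarith : 0 < r t).ne',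
            Finset.card_insert_of_notMem (by simp [ht])]
        beta_reduce
        omega
      · intro y hy
        simp only [Finset.mem_insert, not_or] at hy
        simp [hy.1, hy.2]

/-- Mass `c` can be taken out of a finite law so that at most one point is cut in two. -/
theorem exists_split (r : T → ℝ) (hr : ∀ y, 0 ≤ r y) {c : ℝ} (h0 : 0 ≤ c) (h1 : c ≤ ∑ y, r y) :
    ∃ r₁ : T → ℝ, (∀ y, 0 ≤ r₁ y) ∧ (∀ y, r₁ y ≤ r y) ∧ ∑ y, r₁ y = c ∧
      suppCard r₁ + suppCard (r - r₁) ≤ suppCard r + 1 := by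
  obtain ⟨r₁, h2, h3, h4, h5, -⟩ := exists_split_on r hr Finset.univ c h0 h1
  exact ⟨r₁, h2, h3, h4, h5⟩

theorem exists_sparse_coupling_on {I : Type*} [DecidableEq I] (p : I → ℝ) (hp : ∀ i, 0 ≤ p i)
    (S : Finset I) (hS : S.Nonempty) : ∀ r : T → ℝ, (∀ y, 0 ≤ r y) → ∑ y, r y = ∑ i ∈ S, p i →
      ∃ κ : I → T → ℝ, (∀ i y, 0 ≤ κ i y) ∧ (∀ i ∈ S, ∑ y, κ i y = p i) ∧
        (∀ y, ∑ i ∈ S, κ i y = r y) ∧ ∑ i ∈ S, suppCard (κ i) + 1 ≤ S.card + suppCard r := by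
  induction hS using Finset.Nonempty.cons_induction with
  | singleton i =>
    intro r hr hsum
    refine ⟨fun _ => r, fun _ => hr, ?_, by simp, by simp [add_comm]⟩
    simpa using hsum
  | cons i S hi hS ih =>
    intro r hr hsum
    rw [Finset.sum_cons] at hsum
    have hle : p i ≤ ∑ y, r y := by
      have := Finset.sum_nonneg fun j (_ : j ∈ S) => hp j
      linarith
    obtain ⟨r₁, h1, h2, h3, h4⟩ := exists_split r hr (hp i) hle
    obtain ⟨κ, k1, k2, k3, k4⟩ := ih (r - r₁) (fun y => by simpa using h2 y) (by
      simp only [Pi.sub_apply, Finset.sum_sub_distrib, h3]; linarith)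
    have hne : ∀ j ∈ S, j ≠ i := fun j hj h => hi (h ▸ hj)
    refine ⟨Function.update κ i r₁, ?_, ?_, ?_, ?_⟩
    · intro j y
      by_cases hj : j = i
      · subst hj; simpa using h1 y
      · simpa [hj] using k1 j y
    · intro j hj
      rcases Finset.mem_cons.1 hj with rfl | hj
      · simpa using h3
      · simpa [hne j hj] using k2 j hj
    · intro y
      rw [Finset.sum_cons, Finset.sum_congr rfl fun j hj => by
        rw [Function.update_of_ne (hne j hj)], k3]
      simp
    · rw [Finset.sum_cons, Finset.sum_congr rfl fun j hj => by
        rw [Function.update_of_ne (hne j hj)]]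
      simp only [Function.update_self, Finset.card_cons]
      omega

/-- Two finite laws admit a coupling in which few points of the first one are
compatible with several points of the second one. -/
theorem exists_sparse_coupling {I : Type*} [Fintype I] [Nonempty I] (p : I → ℝ)
    (hp : ∀ i, 0 ≤ p i) (r : T → ℝ) (hr : ∀ y, 0 ≤ r y) (hsum : ∑ y, r y = ∑ i, p i) :
    ∃ κ : I → T → ℝ, (∀ i y, 0 ≤ κ i y) ∧ (∀ i, ∑ y, κ i y = p i) ∧ (∀ y, ∑ i, κ i y = r y) ∧
      ∑ i, suppCard (κ i) + 1 ≤ Fintype.card I + suppCard r := by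
  classical
  obtain ⟨κ, h1, h2, h3, h4⟩ :=
    exists_sparse_coupling_on p hp Finset.univ Finset.univ_nonempty r hr hsum
  exact ⟨κ, h1, fun i => h2 i (Finset.mem_univ i), h3, h4⟩

end Simulation

section Efficient

variable {A T : Type*} [Fintype A] [Fintype T]

theorem suppCard_pos {r : T → ℝ} (h : 0 < ∑ y, r y) : 0 < suppCard r := by
  obtain ⟨y, -, hy⟩ := Finset.exists_ne_zero_of_sum_ne_zero h.ne'
  exact Finset.card_pos.2 ⟨y, by simpa using hy⟩

theorem suppCard_le_card (r : T → ℝ) : suppCard r ≤ Fintype.card T :=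
  (Finset.card_filter_le _ _).trans_eq Finset.card_univ

variable [DecidableEq T]

theorem eq_single_of_suppCard_le_one {r : T → ℝ} {c : ℝ} (hc : 0 < c) (h : ∑ y, r y = c)
    (h1 : suppCard r ≤ 1) : ∃ y, r = Pi.single y c := by
  have h2 : suppCard r = 1 := le_antisymm h1 (suppCard_pos (h ▸ hc))
  obtain ⟨y, hy⟩ := Finset.card_eq_one.1 h2
  have hz : ∀ z, z ≠ y → r z = 0 := fun z hz => by
    by_contra h
    have : z ∈ Finset.univ.filter fun y => r y ≠ 0 := by simpa using h
    rw [hy] at this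
    exact hz (by simpa using this)
  refine ⟨y, funext fun z => ?_⟩
  by_cases hzy : z = y
  · subst hzy
    rw [← h, Finset.sum_eq_single z (fun b _ hb => hz b hb) (by simp)]
    simp
  · simp [hzy, hz z hzy]

theorem sum_mul_log_le {p s : A → ℝ} {m pm : ℝ} (hp : IsProbVector p) (hpm : ∀ a, p a ≤ pm)
    (hpm1 : pm ≤ 1) (hm : 2 ≤ m) (hs : ∀ a, 1 ≤ s a) (hsum : ∑ a, s a + 1 ≤ Fintype.card A + m) :
    ∑ a, p a * Real.log (s a) ≤ Real.log m - (1 - pm) / 2 := by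
  have h1 : ∀ a, p a * Real.log (s a) ≤
      p a * Real.log m + p a * (1 / m - 1) + pm / m * (s a - 1) := by
    intro a
    have h2 := Real.log_le_sub_one_of_pos (x := s a / m)
      (div_pos (by linarith [hs a]) (by linarith))
    rw [Real.log_div (by linarith [hs a]) (by linarith)] at h2
    have h3 := mul_le_mul_of_nonneg_left h2 (hp.1 a).le
    have h4 : p a / m * (s a - 1) ≤ pm / m * (s a - 1) := by
      have := hs a
      have := hpm a
      gcongr
    have h5 : p a * (s a / m - 1) = p a * (1 / m - 1) + p a / m * (s a - 1) := by ring
    linarith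
  have h2 := Finset.sum_le_sum fun a (_ : a ∈ Finset.univ) => h1 a
  simp only [Finset.sum_add_distrib, ← Finset.sum_mul, ← Finset.mul_sum, hp.2,
    Finset.sum_sub_distrib, Finset.sum_const, Finset.card_univ, nsmul_eq_mul, mul_one,
    one_mul] at h2
  have hpm0 : 0 ≤ pm := by
    obtain ⟨a, -, -⟩ := Finset.exists_ne_zero_of_sum_ne_zero (f := p) (s := Finset.univ)
      (by rw [hp.2]; exact one_ne_zero)
    exact (hp.1 a).le.trans (hpm a)
  have h3 : pm / m * (∑ a, s a - Fintype.card A) ≤ pm / m * (m - 1) :=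
    mul_le_mul_of_nonneg_left (by linarith) (by positivity)
  have h4 : 1 / m - 1 + pm / m * (m - 1) ≤ - ((1 - pm) / 2) := by
    have : 1 / m - 1 + pm / m * (m - 1) = -((1 - pm) * (1 - 1 / m)) := by
      field_simp
      ring
    rw [this]
    have h5 : 1 / m ≤ 1 / 2 := one_div_le_one_div_of_le (by norm_num) hm
    nlinarith
  linarith

/-- Every law on a finite set can be simulated in expected time logarithmic in the size
of the set. -/
theorem simulableWithin_log {p : A → ℝ} {pm : ℝ} (hp : IsProbVector p) (hpm : ∀ a, p a ≤ pm)
    (hpm1 : pm < 1) {r : T → ℝ} (hr : ∀ y, 0 ≤ r y) (hr1 : ∑ y, r y = 1) :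
    SimulableWithin p r (2 / (1 - pm) * Real.log (Fintype.card T)) := by
  classical
  have : Nonempty A := by
    obtain ⟨a, -, -⟩ := Finset.exists_ne_zero_of_sum_ne_zero (f := p) (s := Finset.univ)
      (by rw [hp.2]; exact one_ne_zero)
    exact ⟨a⟩
  have hnext : ∀ r : {r : T → ℝ // (∀ y, 0 ≤ r y) ∧ ∑ y, r y = 1},
      ∃ r' : A → {r : T → ℝ // (∀ y, 0 ≤ r y) ∧ ∑ y, r y = 1},
        (∀ y, ∑ a, p a * (r' a).1 y = r.1 y) ∧
        ∑ a, suppCard (r' a).1 + 1 ≤ Fintype.card A + suppCard r.1 := by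
    rintro ⟨r, h0, h1⟩
    obtain ⟨κ, k0, k1, k2, k3⟩ :=
      exists_sparse_coupling p (fun a => (hp.1 a).le) r h0 (h1.trans hp.2.symm)
    refine ⟨fun a => ⟨fun y => κ a y / p a, fun y => div_nonneg (k0 a y) (hp.1 a).le, ?_⟩, ?_, ?_⟩
    · rw [← Finset.sum_div, k1, div_self (hp.1 a).ne']
    · intro y
      refine Eq.trans ?_ (k2 y)
      exact Finset.sum_congr rfl fun a _ => mul_div_cancel₀ _ (hp.1 a).ne'
    · refine le_of_eq_of_le ?_ k3
      simp [suppCard, (hp.1 _).ne']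
  choose next hnext1 hnext2 using hnext
  have hC : 0 < 2 / (1 - pm) := div_pos two_pos (by linarith)
  have hT : suppCard r ≤ Fintype.card T := suppCard_le_card r
  have hpos : ∀ s : {r : T → ℝ // (∀ y, 0 ≤ r y) ∧ ∑ y, r y = 1}, 0 < suppCard s.1 :=
    fun s => suppCard_pos (by rw [s.2.2]; exact one_pos)
  refine ⟨fun w => (w.foldl next ⟨r, hr, hr1⟩).1,
    fun w => 2 / (1 - pm) * Real.log (suppCard (w.foldl next ⟨r, hr, hr1⟩).1),
    fun w => if h : ∃ y, (w.foldl next ⟨r, hr, hr1⟩).1 = Pi.single y 1 then some h.choose else none,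
    ?_, rfl, ?_⟩
  · constructor
    · exact fun w => (w.foldl next ⟨r, hr, hr1⟩).2.1
    · exact fun w => (w.foldl next ⟨r, hr, hr1⟩).2.2
    · intro w _ y
      simp only [List.foldl_append, List.foldl_cons, List.foldl_nil]
      exact hnext1 _ y
    · intro w y hy
      split_ifs at hy with h
      rw [← Option.some.inj hy]
      exact h.choose_spec
    · intro w
      exact mul_nonneg hC.le (Real.log_natCast_nonneg _)
    · intro w hw
      have hns : ¬ ∃ y, (w.foldl next ⟨r, hr, hr1⟩).1 = Pi.single y 1 := by
        intro h
        simp [h] at hw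
      simp only [List.foldl_append, List.foldl_cons, List.foldl_nil]
      generalize w.foldl next ⟨r, hr, hr1⟩ = s at hns ⊢
      have h2 : 2 ≤ suppCard s.1 := by
        by_contra hlt
        exact hns (eq_single_of_suppCard_le_one one_pos s.2.2 (by omega))
      have := sum_mul_log_le (s := fun a => (suppCard (next s a).1 : ℝ)) (m := suppCard s.1)
        hp hpm hpm1.le (by exact_mod_cast h2) (fun a => by exact_mod_cast hpos _)
        (by exact_mod_cast hnext2 s)
      have h3 := mul_le_mul_of_nonneg_left this hC.le
      rw [Finset.mul_sum] at h3
      have h4 : 2 / (1 - pm) * ((1 - pm) / 2) = 1 := by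
        have : 1 - pm ≠ 0 := by linarith
        field_simp
      rw [mul_sub, h4] at h3
      simp only [mul_left_comm (2 / (1 - pm))] at h3
      simp only [mul_left_comm _ (2 / (1 - pm))] at h3 ⊢
      linarith
  · have h1 : (0 : ℝ) < suppCard r := by exact_mod_cast hpos ⟨r, hr, hr1⟩
    have h2 : (suppCard r : ℝ) ≤ Fintype.card T := by exact_mod_cast hT
    simp only [List.foldl_nil]
    gcongr

/-- A law `P` all of whose likely atoms are small splits a law `Q` whose likely atoms are large
into conditional laws which are mostly point masses. -/
theorem exists_mostly_single {U : Type*} [Fintype U] [Nonempty U] {P : U → ℝ} {Q : T → ℝ}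
    (hP : IsProbVector P) (hQ : ∀ y, 0 ≤ Q y) (hQ1 : ∑ y, Q y = 1) {ω W : ℝ} (hω : 0 < ω)
    (hW : 0 < W) :
    ∃ (r : U → T → ℝ) (G : U → Prop), (∀ u y, 0 ≤ r u y) ∧ (∀ u, ∑ y, r u y = 1) ∧
      (∀ y, ∑ u, P u * r u y = Q y) ∧ (∀ u, G u → ∃ y, r u = Pi.single y 1) ∧
      ∀ [DecidablePred G], ∑ u, (if G u then 0 else P u) ≤
        ∑ u, (if ω < P u then P u else 0) + ∑ y, (if Q y < W then Q y else 0) + ω / W := by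
  classical
  set δ := ∑ y, (if Q y < W then Q y else 0) with hδ
  have hδ0 : 0 ≤ δ := Finset.sum_nonneg fun y _ => by split_ifs <;> simp [hQ]
  let R : Option T → ℝ := fun o => o.elim δ fun y => if Q y < W then 0 else Q y
  have hR0 : ∀ o, 0 ≤ R o := by
    rintro (_ | y)
    · exact hδ0
    · simp only [R, Option.elim]
      split_ifs <;> simp [hQ]
  have hR1 : ∑ o, R o = 1 := by
    rw [Fintype.sum_option]
    simp only [R, Option.elim, hδ]
    rw [← Finset.sum_add_distrib, ← hQ1]
    exact Finset.sum_congr rfl fun y _ => by split_ifs <;> simp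
  obtain ⟨κ, k0, k1, k2, k3⟩ :=
    exists_sparse_coupling P (fun a => (hP.1 a).le) R hR0 (hR1.trans hP.2.symm)
  have hnone : ∀ u, κ u none ≤ δ := fun u => by
    rw [← show R none = δ from rfl, ← k2 none]
    exact Finset.single_le_sum (f := fun u => κ u none) (fun v _ => k0 v none) (Finset.mem_univ u)
  have hcancel : ∀ u, κ u none * (δ / δ) = κ u none := by
    intro u
    by_cases h : δ = 0
    · have := k0 u none
      have := hnone u
      rw [show κ u none = 0 by linarith]
      simp
    · rw [div_self h, mul_one]
  have hsup : ∀ u, 0 < suppCard (κ u) := fun u => suppCard_pos (by rw [k1]; exact hP.1 u)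
  refine ⟨fun u y => (κ u (some y) + κ u none * ((if Q y < W then Q y else 0) / δ)) / P u,
    fun u => suppCard (κ u) ≤ 1 ∧ κ u none = 0, ?_, ?_, ?_, ?_, ?_⟩
  · intro u y
    refine div_nonneg (add_nonneg (k0 _ _) (mul_nonneg (k0 _ _) (div_nonneg ?_ hδ0))) (hP.1 u).le
    split_ifs <;> simp [hQ]
  · intro u
    rw [← Finset.sum_div, Finset.sum_add_distrib, ← Finset.mul_sum, ← Finset.sum_div, ← hδ, hcancel,
      add_comm, ← Fintype.sum_option, k1, div_self (hP.1 u).ne']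
  · intro y
    rw [Finset.sum_congr rfl fun u _ => mul_div_cancel₀ _ (hP.1 u).ne', Finset.sum_add_distrib,
      ← Finset.sum_mul, k2, k2]
    simp only [R, Option.elim]
    split_ifs with h
    · by_cases hd : δ = 0
      · have : Q y ≤ δ := by
          have := Finset.single_le_sum (f := fun y => if Q y < W then Q y else 0)
            (fun y _ => by split_ifs <;> simp [hQ]) (Finset.mem_univ y)
          simpa [h] using this
        have := hQ y
        rw [show Q y = 0 by linarith]
        simp
      · field_simp
        simp
    · simp
  · rintro u ⟨h1, h2⟩
    obtain ⟨o, ho⟩ := eq_single_of_suppCard_le_one (hP.1 u) (k1 u) h1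
    rcases o with _ | y
    · rw [ho] at h2
      simp [(hP.1 u).ne'] at h2
    · refine ⟨y, funext fun z => ?_⟩
      beta_reduce
      rw [h2, ho]
      by_cases hz : z = y
      · subst hz
        simp [(hP.1 u).ne']
      · simp [hz]
  · intro _
    have hpt : ∀ u, (if suppCard (κ u) ≤ 1 ∧ κ u none = 0 then 0 else P u) ≤
        (if ω < P u then P u else 0) + κ u none + ω * ((suppCard (κ u) : ℝ) - 1) := by
      intro u
      have a1 : (1 : ℝ) ≤ suppCard (κ u) := by exact_mod_cast hsup u
      have a2 : 0 ≤ ω * ((suppCard (κ u) : ℝ) - 1) := mul_nonneg hω.le (by linarith)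
      have a3 := k0 u none
      have a4 := hP.1 u
      split_ifs with h1 h2 h2
      · linarith
      · linarith
      · linarith
      · by_cases h3 : suppCard (κ u) ≤ 1
        · obtain ⟨o, ho⟩ := eq_single_of_suppCard_le_one (hP.1 u) (k1 u) h3
          rcases o with _ | y
          · have : κ u none = P u := by rw [ho]; simp
            linarith
          · exact absurd ⟨h3, by rw [ho]; simp⟩ h1
        · have a5 : (2 : ℝ) ≤ suppCard (κ u) := by exact_mod_cast (by omega : 2 ≤ suppCard (κ u))
          nlinarith
    have hcard : (suppCard R : ℝ) - 1 ≤ 1 / W := by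
      have b1 : suppCard R ≤ (Finset.univ.filter fun y => ¬ Q y < W).card + 1 := by
        refine (Finset.card_le_card (t := insert none
          ((Finset.univ.filter fun y => ¬ Q y < W).map Function.Embedding.some)) ?_).trans
            ((Finset.card_insert_le _ _).trans_eq (by rw [Finset.card_map]))
        rintro (_ | y) hy
        · simp
        · have hy : R (some y) ≠ 0 := (Finset.mem_filter.1 hy).2
          simp only [Finset.mem_insert, reduceCtorEq, Finset.mem_map, Finset.mem_filter,
            false_or]
          refine ⟨y, ⟨Finset.mem_univ _, fun h => hy (if_pos h)⟩, rfl⟩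
      have b2 : ((Finset.univ.filter fun y => ¬ Q y < W).card : ℝ) * W ≤ 1 := by
        rw [← nsmul_eq_mul, ← Finset.sum_const, ← hQ1]
        refine (Finset.sum_le_sum fun y hy => ?_).trans
          (Finset.sum_le_univ_sum_of_nonneg hQ)
        simpa using hy
      rw [le_div_iff₀ hW]
      have b3 : (suppCard R : ℝ) - 1 ≤ (Finset.univ.filter fun y => ¬ Q y < W).card := by
        have : (suppCard R : ℝ) ≤ (Finset.univ.filter fun y => ¬ Q y < W).card + 1 := by
          exact_mod_cast b1
        linarith
      nlinarith
    have hsumc : ∑ u, ((suppCard (κ u) : ℝ) - 1) ≤ (suppCard R : ℝ) - 1 := by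
      have : (∑ u, (suppCard (κ u) : ℝ)) + 1 ≤ Fintype.card U + suppCard R := by exact_mod_cast k3
      rw [Finset.sum_sub_distrib]
      simp only [Finset.sum_const, Finset.card_univ, nsmul_eq_mul, mul_one]
      linarith
    refine (Finset.sum_le_sum (g := fun u => (if ω < P u then P u else 0) + κ u none +
      ω * ((suppCard (κ u) : ℝ) - 1)) fun u _ => ?_).trans ?_
    · convert hpt u
    · rw [Finset.sum_add_distrib, Finset.sum_add_distrib, ← Finset.mul_sum, k2]
      have : ω * ∑ u, ((suppCard (κ u) : ℝ) - 1) ≤ ω / W := by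
        rw [div_eq_mul_one_div]
        exact mul_le_mul_of_nonneg_left (hsumc.trans hcard) hω.le
      simp only [R, Option.elim]
      linarith

end Efficient

section EntropyGap

variable {A B : Type*} [Fintype A] [Fintype B]

theorem IsProbVector.words {p : A → ℝ} (hp : IsProbVector p) (n : ℕ) :
    IsProbVector fun u : Fin n → A => ∏ i, p (u i) := by
  refine ⟨fun u => Finset.prod_pos fun i _ => hp.1 _, ?_⟩
  have := (Fintype.prod_sum fun (_ : Fin n) a => p a).symm
  simpa [hp.2] using this

/-- The exponential Markov inequality for sums of functions of negative mean. -/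
theorem exists_exponential_bound {p f : A → ℝ} (hp : IsProbVector p) (hf : ∑ a, p a * f a < 0) :
    ∃ c : ℝ, 0 ≤ c ∧ c < 1 ∧ ∀ (n : ℕ) (S : (Fin n → A) → Prop) [DecidablePred S],
      (∀ u, S u → 0 ≤ ∑ i, f (u i)) → ∑ u, (if S u then ∏ i, p (u i) else 0) ≤ c ^ n := by
  let φ : ℝ → ℝ := fun s => ∑ a, p a * Real.exp (s * f a)
  have hφ0 : φ 0 = 1 := by simp [φ, hp.2]
  have hd : HasDerivAt φ (∑ a, p a * f a) 0 := by
    refine HasDerivAt.fun_sum fun a _ => ?_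
    have := (((hasDerivAt_id (0 : ℝ)).mul_const (f a)).exp).const_mul (p a)
    simpa using this
  obtain ⟨s, hs0, hs1⟩ : ∃ s, 0 < s ∧ φ s < 1 := by
    have h := hd.tendsto_slope_zero_right
    have h2 := (h.eventually (gt_mem_nhds hf)).and self_mem_nhdsWithin
    obtain ⟨s, hs, hs0⟩ := h2.exists
    refine ⟨s, hs0, ?_⟩
    rw [hφ0, zero_add, smul_eq_mul] at hs
    have hs0 : 0 < s := hs0
    have := (mul_neg_iff.1 hs).resolve_right fun h => by
      have := inv_pos.2 hs0
      linarith [h.1]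
    linarith [this.2]
  refine ⟨φ s, Finset.sum_nonneg fun a _ => mul_nonneg (hp.1 a).le (Real.exp_nonneg _), hs1, ?_⟩
  intro n S _ hS
  have : φ s ^ n = ∑ u : Fin n → A, ∏ i, (p (u i) * Real.exp (s * f (u i))) := by
    have := (Fintype.prod_sum fun (_ : Fin n) a => p a * Real.exp (s * f a))
    simpa [φ] using this
  rw [this]
  refine Finset.sum_le_sum fun u _ => ?_
  have hpos : 0 ≤ ∏ i, p (u i) := Finset.prod_nonneg fun i _ => (hp.1 _).le
  rw [Finset.prod_mul_distrib, ← Real.exp_sum, ← Finset.mul_sum]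
  split_ifs with h
  · exact le_mul_of_one_le_right hpos (Real.one_le_exp (mul_nonneg hs0.le (hS u h)))
  · positivity

theorem IsProbVector.log_prod {p : A → ℝ} (hp : IsProbVector p) {n : ℕ} (u : Fin n → A) :
    Real.log (∏ i, p (u i)) = ∑ i, Real.log (p (u i)) :=
  Real.log_prod fun _ _ => (hp.1 _).ne'

/-- If the entropy of `q` is less than the entropy of `p`, long words of law `q` can be simulated
from letters of law `p` in expected time less than their length. -/
theorem exists_simulableWithin_lt {p : A → ℝ} {q : B → ℝ} (hp : IsProbVector p)
    (hq : IsProbVector q) (hH : vecEntropy q < vecEntropy p) {pm : ℝ} (hpm : ∀ a, p a ≤ pm)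
    (hpm1 : pm < 1) [DecidableEq B] :
    ∃ L : ℕ, 0 < L ∧ ∃ c < (L : ℝ), SimulableWithin p (fun y : Fin L → B => ∏ i, q (y i)) c := by
  classical
  obtain ⟨h₁, hq1, h1p⟩ := exists_between hH
  obtain ⟨h₂, h12, h2p⟩ := exists_between h1p
  obtain ⟨cp, cp0, cp1, hcp⟩ := exists_exponential_bound (f := fun a => Real.log (p a) + h₂) hp (by
    simp only [mul_add, Finset.sum_add_distrib, ← Finset.sum_mul, hp.2]
    unfold vecEntropy at h2p
    linarith)
  obtain ⟨cq, cq0, cq1, hcq⟩ := exists_exponential_bound (f := fun b => -Real.log (q b) - h₁) hq (by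
    simp only [mul_sub, mul_neg, Finset.sum_sub_distrib, ← Finset.sum_mul, hq.2,
      Finset.sum_neg_distrib]
    unfold vecEntropy at hq1
    linarith)
  obtain ⟨m₀, hm₀⟩ := exists_nat_gt (h₁ / (h₂ - h₁))
  rw [div_lt_iff₀ (by linarith)] at hm₀
  let m := m₀ + 1
  have hm : (m + 1) * h₁ < m * h₂ := by
    simp only [m]
    push_cast
    nlinarith
  let d := m * h₂ - (m + 1) * h₁
  have hd : 0 < d := by simp only [d]; linarith
  let K := 2 / (1 - pm) * Real.log (Fintype.card B) * (m + 1)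
  have hK : 0 ≤ K := by
    have : 0 ≤ 1 - pm := by linarith
    have := Real.log_natCast_nonneg (Fintype.card B)
    positivity
  have hlim : Tendsto (fun N : ℕ => (cp ^ N + cq ^ N + Real.exp (-d) ^ N) * K) atTop
      (nhds ((0 + 0 + 0) * K)) :=
    (((tendsto_pow_atTop_nhds_zero_of_lt_one cp0 cp1).add
      (tendsto_pow_atTop_nhds_zero_of_lt_one cq0 cq1)).add
      (tendsto_pow_atTop_nhds_zero_of_lt_one (Real.exp_nonneg _)
        (Real.exp_lt_one_iff.2 (by linarith)))).mul_const K
  obtain ⟨N, hN, hN1⟩ := ((hlim.eventually (gt_mem_nhds (by simp : (0 + 0 + 0) * K < 1))).and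
    (eventually_ge_atTop 1)).exists
  have : Nonempty A := by
    obtain ⟨a, -, -⟩ := Finset.exists_ne_zero_of_sum_ne_zero (f := p) (s := Finset.univ)
      (by rw [hp.2]; exact one_ne_zero)
    exact ⟨a⟩
  have hPn := hp.words (N * m)
  have hQL := hq.words (N * (m + 1))
  obtain ⟨r, G, hr0, hr1, hrQ, hG, hGsum⟩ := exists_mostly_single hPn (fun y => (hQL.1 y).le) hQL.2
    (Real.exp_pos (-((N * m : ℕ) * h₂))) (Real.exp_pos (-((N * (m + 1) : ℕ) * h₁)))
  let X := 2 / (1 - pm) * Real.log (Fintype.card (Fin (N * (m + 1)) → B))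
  have hX : X = N * K := by
    simp only [X, K, Fintype.card_fun, Fintype.card_fin]
    push_cast
    rw [Real.log_pow]
    push_cast
    ring
  have key := SimulableWithin.words hp (r := r) (c := fun u => if G u then 0 else X) fun u => by
    split_ifs with h
    · obtain ⟨y, hy⟩ := hG u h
      rw [hy]
      exact simulableWithin_single p y
    · exact simulableWithin_log hp hpm hpm1 (hr0 u) (hr1 u)
  simp only [hrQ] at key
  refine ⟨N * (m + 1), by positivity, _, ?_, key⟩
  have hbad := hGsum
  have e1 : ∑ u : Fin (N * m) → A, (if Real.exp (-((N * m : ℕ) * h₂)) < ∏ i, p (u i) then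
      ∏ i, p (u i) else 0) ≤ cp ^ N := by
    refine (hcp _ _ fun u hu => ?_).trans
      (pow_le_pow_of_le_one cp0 cp1.le (Nat.le_mul_of_pos_right N (Nat.succ_pos m₀)))
    have := Real.log_le_log (Real.exp_pos _) hu.le
    rw [Real.log_exp, hp.log_prod] at this
    simp only [Finset.sum_add_distrib, Finset.sum_const, Finset.card_univ, Fintype.card_fin,
      nsmul_eq_mul]
    linarith
  have e2 : ∑ y : Fin (N * (m + 1)) → B, (if ∏ i, q (y i) < Real.exp (-((N * (m + 1) : ℕ) * h₁))
      then ∏ i, q (y i) else 0) ≤ cq ^ N := by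
    refine (hcq _ _ fun u hu => ?_).trans
      (pow_le_pow_of_le_one cq0 cq1.le (Nat.le_mul_of_pos_right N (Nat.succ_pos m)))
    have := Real.log_le_log (hQL.1 u) hu.le
    rw [Real.log_exp, hq.log_prod] at this
    simp only [Finset.sum_sub_distrib, Finset.sum_const, Finset.card_univ, Fintype.card_fin,
      nsmul_eq_mul, Finset.sum_neg_distrib]
    linarith
  have e3 : Real.exp (-((N * m : ℕ) * h₂)) / Real.exp (-((N * (m + 1) : ℕ) * h₁)) =
      Real.exp (-d) ^ N := by
    rw [← Real.exp_sub, ← Real.exp_nat_mul]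
    congr 1
    simp only [d]
    push_cast
    ring
  rw [e3] at hbad
  have e4 : ∑ u : Fin (N * m) → A, (∏ i, p (u i)) * (if G u then 0 else X) =
      (∑ u : Fin (N * m) → A, if G u then 0 else ∏ i, p (u i)) * X := by
    rw [Finset.sum_mul]
    exact Finset.sum_congr rfl fun u _ => by split_ifs <;> simp
  rw [e4, hX]
  have hN0 : (0 : ℝ) < N := by exact_mod_cast hN1
  have e5 := mul_le_mul_of_nonneg_right (hbad.trans (add_le_add (add_le_add e1 e2) le_rfl))
    (mul_nonneg hN0.le hK)
  push_cast
  nlinarith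

end EntropyGap

section FiniteDependence

variable {A : Type*}

/-- `f` depends on finitely many coordinates only. -/
def FinDep {β : Type*} (f : (ℤ → A) → β) : Prop := ∃ F : Finset ℤ, DependsOn f (F : Set ℤ)

theorem FinDep.comp {β γ : Type*} {f : (ℤ → A) → β} (hf : FinDep f) (g : β → γ) :
    FinDep fun x => g (f x) := by
  obtain ⟨F, hF⟩ := hf
  exact ⟨F, fun x y h => congrArg g (hF h)⟩

theorem FinDep.comp₂ {β γ δ : Type*} {f : (ℤ → A) → β} {f' : (ℤ → A) → γ} (hf : FinDep f)
    (hf' : FinDep f') (g : β → γ → δ) : FinDep fun x => g (f x) (f' x) := by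
  classical
  obtain ⟨F, hF⟩ := hf
  obtain ⟨F', hF'⟩ := hf'
  refine ⟨F ∪ F', fun x y h => ?_⟩
  dsimp only
  rw [hF fun i hi => h i (by simp_all), hF' fun i hi => h i (by simp_all)]

theorem FinDep.apply (t : ℤ) : FinDep fun x : ℤ → A => x t :=
  ⟨{t}, fun x y h => h t (by simp)⟩

theorem FinDep.update {β : Type*} {f : (ℤ → A) → β} (hf : FinDep f) (t : ℤ) (a : A) :
    FinDep fun x => f (Function.update x t a) := by
  obtain ⟨F, hF⟩ := hf
  refine ⟨F, fun x y h => hF fun i hi => ?_⟩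
  by_cases hit : i = t
  · subst hit
    simp
  · simp [hit, h i hi]

theorem FinDep.finite_range [Fintype A] {β : Type*} {f : (ℤ → A) → β} (hf : FinDep f) :
    (Set.range f).Finite := by
  obtain ⟨F, hF⟩ := hf
  rcases isEmpty_or_nonempty β with h | h
  · exact Set.toFinite _
  obtain ⟨g, rfl⟩ := dependsOn_iff_exists_comp.1 hF
  exact (Set.finite_range g).subset (Set.range_comp_subset_range _ _)

variable [Fintype A] [MeasurableSpace A] [DiscreteMeasurableSpace A]

theorem FinDep.measurable {β : Type*} [MeasurableSpace β] {f : (ℤ → A) → β} (hf : FinDep f) :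
    Measurable f := by
  obtain ⟨F, hF⟩ := hf
  rcases isEmpty_or_nonempty β with h | h
  · have : IsEmpty (ℤ → A) := f.isEmpty
    exact measurable_of_empty f
  obtain ⟨g, rfl⟩ := dependsOn_iff_exists_comp.1 hF
  exact (Measurable.of_discrete (f := g)).comp (Finset.measurable_restrict F)

theorem FinDep.integrable {f : (ℤ → A) → ℝ} (hf : FinDep f) (μ : Measure (ℤ → A))
    [IsProbabilityMeasure μ] : Integrable f μ := by
  obtain ⟨C, hC⟩ := (hf.finite_range.image fun r => ‖r‖).bddAbove
  exact Integrable.of_bound hf.measurable.aestronglyMeasurable C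
    (.of_forall fun x => hC ⟨f x, ⟨x, rfl⟩, rfl⟩)

theorem FinDep.measurableSet {s : (ℤ → A) → Prop} (hs : FinDep s) : MeasurableSet {x | s x} :=
  measurableSet_setOfPred.2 hs.measurable

end FiniteDependence

section BernoulliMeasure

variable {A : Type*} [MeasurableSpace A]

theorem IsBernoulliMeasure.isProbabilityMeasure {p : A → ℝ} {μ : Measure (ℤ → A)} [Nonempty A]
    (hμ : IsBernoulliMeasure μ p) : IsProbabilityMeasure μ :=
  ⟨by simpa using hμ ∅ fun _ => Classical.arbitrary A⟩

variable [Fintype A] [DiscreteMeasurableSpace A]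

theorem IsBernoulliMeasure.unique {p : A → ℝ} {μ μ' : Measure (ℤ → A)} [Nonempty A]
    (hμ : IsBernoulliMeasure μ p) (hμ' : IsBernoulliMeasure μ' p) : μ = μ' := by
  have := hμ.isProbabilityMeasure
  have := hμ'.isProbabilityMeasure
  refine IsProjectiveLimit.unique (P := fun I : Finset ℤ => μ.map I.restrict) (fun I => rfl)
    fun I => ?_
  refine Measure.ext_of_singleton fun s => ?_
  classical
  let s' : ℤ → A := fun i => if h : i ∈ I then s ⟨i, h⟩ else Classical.arbitrary A
  have key : I.restrict (π := fun _ => A) ⁻¹' {s} = {x : ℤ → A | ∀ i ∈ I, x i = s' i} := by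
    ext x
    simp only [Set.mem_preimage, Set.mem_singleton_iff, Set.mem_ofPred_eq, funext_iff, s']
    constructor
    · intro h i hi
      simpa [hi] using h ⟨i, hi⟩
    · intro h i
      simpa using h i i.2
  rw [Measure.map_apply (Finset.measurable_restrict I) (measurableSet_singleton s),
    Measure.map_apply (Finset.measurable_restrict I) (measurableSet_singleton s), key, hμ, hμ']

/-- Resampling one coordinate preserves a Bernoulli measure. -/
theorem IsBernoulliMeasure.eq_sum_map_update {p : A → ℝ} (hp : IsProbVector p)
    {μ : Measure (ℤ → A)} [Nonempty A] (hμ : IsBernoulliMeasure μ p) (t : ℤ) :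
    μ = ∑ a, ENNReal.ofReal (p a) • μ.map fun x => Function.update x t a := by
  classical
  refine hμ.unique (p := p) fun F s => ?_
  have hF : MeasurableSet {x : ℤ → A | ∀ i ∈ F, x i = s i} :=
    FinDep.measurableSet ⟨F, fun x y h => by
      simp only [eq_iff_iff]
      exact forall₂_congr fun i hi => by rw [h i hi]⟩
  simp only [Measure.finsetSum_apply, Measure.smul_apply, smul_eq_mul,
    Measure.map_apply measurable_update_left hF, Set.preimage_ofPred_eq]
  by_cases ht : t ∈ F
  · have h (a : A) : μ {x | ∀ i ∈ F, Function.update x t a i = s i} =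
        if a = s t then ENNReal.ofReal (∏ i ∈ F.erase t, p (s i)) else 0 := by
      split_ifs with hs
      · rw [← hμ]
        congr 1
        ext x
        refine forall_congr' fun i => ?_
        by_cases hi : i = t
        · subst hi
          simp [hs]
        · simp [hi]
      · convert measure_empty (μ := μ)
        refine Set.eq_empty_of_forall_notMem fun x hx => hs ?_
        simpa using hx t ht
    simp only [h, mul_ite, mul_zero, Finset.sum_ite_eq', Finset.mem_univ, if_true]
    rw [← ENNReal.ofReal_mul (hp.1 _).le, Finset.mul_prod_erase F (fun i => p (s i)) ht]
  · have h (a : A) : μ {x | ∀ i ∈ F, Function.update x t a i = s i} =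
        ENNReal.ofReal (∏ i ∈ F, p (s i)) := by
      rw [← hμ]
      congr 1
      ext x
      refine forall₂_congr fun i hi => ?_
      rw [Function.update_of_ne (ne_of_mem_of_not_mem hi ht)]
    simp only [h]
    rw [← Finset.sum_mul, ← ENNReal.ofReal_sum_of_nonneg fun i _ => (hp.1 i).le, hp.2]
    simp

theorem IsBernoulliMeasure.integral_resample {p : A → ℝ} (hp : IsProbVector p)
    {μ : Measure (ℤ → A)} [Nonempty A] (hμ : IsBernoulliMeasure μ p) (t : ℤ) {f : (ℤ → A) → ℝ}
    (hf : FinDep f) : ∫ x, f x ∂μ = ∫ x, ∑ a, p a * f (Function.update x t a) ∂μ := by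
  have := hμ.isProbabilityMeasure
  have hu (a : A) : AEMeasurable (fun x : ℤ → A => Function.update x t a) μ :=
    measurable_update_left.aemeasurable
  have hm (a : A) : Integrable f (μ.map fun x => Function.update x t a) :=
    have := Measure.isProbabilityMeasure_map (hu a)
    hf.integrable _
  conv_lhs => rw [hμ.eq_sum_map_update hp t]
  rw [integral_finsetSum_measure fun a _ => (hm a).smul_measure ENNReal.ofReal_ne_top,
    integral_finsetSum _ fun a _ => ((hf.update t a).integrable μ).const_mul (p a)]
  refine Finset.sum_congr rfl fun a _ => ?_
  rw [integral_smul_measure, integral_map (hu a)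
    hf.measurable.aestronglyMeasurable, ENNReal.toReal_ofReal (hp.1 a).le, smul_eq_mul,
    integral_const_mul]

end BernoulliMeasure

section Marker

open Classical in
/-- The indicator of a proposition. -/
def ind (P : Prop) : ℝ := if P then 1 else 0

theorem ind_of {P : Prop} (h : P) : ind P = 1 := if_pos h

theorem ind_of_not {P : Prop} (h : ¬P) : ind P = 0 := if_neg h

theorem ind_nonneg (P : Prop) : 0 ≤ ind P := by unfold ind; split_ifs <;> simp

theorem ind_le_one (P : Prop) : ind P ≤ 1 := by unfold ind; split_ifs <;> simp

theorem ind_mono {P Q : Prop} (h : P → Q) : ind P ≤ ind Q := by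
  by_cases hP : P
  · rw [ind_of hP, ind_of (h hP)]
  · rw [ind_of_not hP]
    exact ind_nonneg Q

theorem ind_and (P Q : Prop) : ind (P ∧ Q) = ind P * ind Q := by
  by_cases hP : P <;> by_cases hQ : Q <;> simp [ind, hP, hQ]

theorem ind_not (P : Prop) : ind (¬P) = 1 - ind P := by
  by_cases hP : P <;> simp [ind, hP]

variable {A : Type*}

/-- The last `k` letters up to time `t` are all equal to `a₀`. -/
def Marker (k : ℕ) (a₀ : A) (x : ℤ → A) (t : ℤ) : Prop := ∀ i < k, x (t - (i : ℕ)) = a₀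

/-- No marker ends at any of the times `s - 1, s - 1 - k, …, s - 1 - (j - 1) k`. -/
def NoMarker (k : ℕ) (a₀ : A) (x : ℤ → A) (s : ℤ) (j : ℕ) : Prop :=
  ∀ i < j, ¬Marker k a₀ x (s - 1 - (i * k : ℕ))

variable {k : ℕ} {a₀ : A}

theorem Marker.congr {x y : ℤ → A} {t : ℤ} (h : ∀ i : ℤ, t - k < i → i ≤ t → x i = y i) :
    Marker k a₀ x t ↔ Marker k a₀ y t :=
  forall₂_congr fun i hi => by rw [h _ (by omega) (by omega)]

theorem FinDep.marker (t : ℤ) : FinDep fun x : ℤ → A => Marker k a₀ x t :=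
  ⟨Finset.Icc (t - k) t, fun x y h => by
    simp only [eq_iff_iff]
    exact Marker.congr fun i hi hi' => h i (by simp; omega)⟩

theorem noMarker_succ {x : ℤ → A} {s : ℤ} {j : ℕ} : NoMarker k a₀ x s (j + 1) ↔
    NoMarker k a₀ x s j ∧ ¬Marker k a₀ x (s - 1 - (j * k : ℕ)) :=
  Nat.forall_lt_succ_right

theorem NoMarker.congr {x y : ℤ → A} {s : ℤ} {j : ℕ}
    (h : ∀ i : ℤ, s - 1 - (j * k : ℕ) < i → i < s → x i = y i) :
    NoMarker k a₀ x s j ↔ NoMarker k a₀ y s j := by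
  refine forall₂_congr fun i hi => not_congr (Marker.congr fun l hl hl' => h l ?_ (by omega))
  have : (i + 1) * k ≤ j * k := Nat.mul_le_mul_right k hi
  rw [Nat.succ_mul] at this
  omega

theorem FinDep.noMarker (s : ℤ) (j : ℕ) : FinDep fun x : ℤ → A => NoMarker k a₀ x s j :=
  ⟨Finset.Icc (s - 1 - (j * k : ℕ)) s, fun x y h => by
    simp only [eq_iff_iff]
    exact NoMarker.congr fun i hi hi' => h i (by simp only [Finset.coe_Icc, Set.mem_Icc]; omega)⟩

variable [Fintype A] [MeasurableSpace A] [DiscreteMeasurableSpace A]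

theorem IsBernoulliMeasure.integral_mul_marker {p : A → ℝ} (hp : IsProbVector p)
    {μ : Measure (ℤ → A)} (hμ : IsBernoulliMeasure μ p) {f : (ℤ → A) → ℝ} (hf : FinDep f) {t : ℤ}
    (h : DependsOn f {i | i ≤ t - k ∨ t < i}) :
    ∫ x, f x * ind (Marker k a₀ x t) ∂μ = p a₀ ^ k * ∫ x, f x ∂μ := by
  have : Nonempty A := ⟨a₀⟩
  induction k generalizing f with
  | zero => simp [Marker, ind]
  | succ k ih =>
    have h1 (x : ℤ → A) : Marker (k + 1) a₀ x t ↔ x (t - k) = a₀ ∧ Marker k a₀ x t := by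
      rw [and_comm]
      exact Nat.forall_lt_succ_right
    have hf' : FinDep fun x => f x * ind (x (t - k) = a₀) :=
      hf.comp₂ (FinDep.apply (t - k)) fun r a => r * ind (a = a₀)
    simp only [h1, ind_and, ← mul_assoc]
    rw [ih hf']
    · rw [hμ.integral_resample hp (t - k) hf']
      have h2 (x : ℤ → A) (a : A) : f (Function.update x (t - k) a) = f x := h fun i hi => by
        refine Function.update_of_ne ?_ _ _
        simp only [Set.mem_ofPred_eq] at hi
        push_cast at hi
        omega
      have h3 (x : ℤ → A) : ∑ a, p a * (f x * ind (a = a₀)) = p a₀ * f x := by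
        classical
        simp [ind]
      simp only [h2, Function.update_self, h3]
      rw [integral_const_mul]
      ring
    · intro x y hxy
      simp only [Set.mem_ofPred_eq] at hxy
      dsimp only
      rw [hxy (t - k) (by omega), h fun i hi => hxy i ?_]
      simp only [Set.mem_ofPred_eq] at hi
      push_cast at hi
      omega

theorem IsBernoulliMeasure.integral_noMarker {p : A → ℝ} (hp : IsProbVector p)
    {μ : Measure (ℤ → A)} (hμ : IsBernoulliMeasure μ p) (s : ℤ) (j : ℕ) :
    ∫ x, ind (NoMarker k a₀ x s j) ∂μ = (1 - p a₀ ^ k) ^ j := by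
  have : Nonempty A := ⟨a₀⟩
  have := hμ.isProbabilityMeasure
  induction j with
  | zero => simp [NoMarker, ind]
  | succ j ih =>
    have hN : FinDep fun x => ind (NoMarker k a₀ x s j) := (FinDep.noMarker s j).comp ind
    have hM : FinDep fun x =>
        ind (NoMarker k a₀ x s j) * ind (Marker k a₀ x (s - 1 - (j * k : ℕ))) :=
      hN.comp₂ (FinDep.marker _) fun r P => r * ind P
    simp only [noMarker_succ, ind_and, ind_not, mul_sub, mul_one]
    rw [integral_sub (hN.integrable μ) (hM.integrable μ), hμ.integral_mul_marker hp hN, ih]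
    · ring
    · intro x y hxy
      refine congrArg ind (propext (NoMarker.congr fun i hi _ => hxy i (Or.inr hi)))

end Marker

section Machine

variable {A B : Type*} {L : ℕ} (out : List A → Option (Fin L → B))

/-- Feed the letter `a` to the first unfinished task of a stack of tasks. A task is a pair of a
block size and the word read so far on its behalf. -/
def serve (a : A) : List (ℕ × List A) → List (ℕ × List A)
  | [] => []
  | (n, w) :: l =>
    match out w with
    | none => (n, w ++ [a]) :: l
    | some _ => (n, w) :: serve a l

/-- All tasks of the stack are finished. -/
def Resolved (l : List (ℕ × List A)) : Prop := ∀ v ∈ l, out v.2 ≠ none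

open Classical in
/-- One step of the machine. A configuration consists of the length of the block being formed and
of the stack of tasks for the blocks already formed. The current block is closed when it reaches
length `L` or when a marker is seen. -/
def machineStep (mk : Prop) (a : A) (σ : ℕ × List (ℕ × List A)) : ℕ × List (ℕ × List A) :=
  if σ.1 + 1 = L ∨ mk then (0, (σ.1 + 1, []) :: serve out a σ.2) else (σ.1 + 1, serve out a σ.2)

variable (k : ℕ) (a₀ : A)

/-- The configuration of the machine after reading `n` letters of `x` from time `t₀` on. -/
def run (x : ℤ → A) (t₀ : ℤ) : ℕ → ℕ × List (ℕ × List A)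
  | 0 => (0, [])
  | n + 1 => machineStep out (Marker k a₀ x (t₀ + n)) (x (t₀ + n)) (run x t₀ n)

/-- The letter at distance `e` from the right end of the blocks in a stack of tasks. -/
def lookup [NeZero L] : List (ℕ × List A) → ℕ → Option B
  | [], _ => none
  | (n, w) :: l, e =>
    if e < n then (out w).map fun y => y (Fin.ofNat L (n - 1 - e)) else lookup l (e - n)

/-- The letter at site `s` produced by the machine after `n` steps, if it is known. -/
def siteOut [NeZero L] (x : ℤ → A) (t₀ : ℤ) (n : ℕ) (s : ℤ) : Option B :=
  let o := t₀ + n - (run out k a₀ x t₀ n).1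
  if s < o then lookup out (run out k a₀ x t₀ n).2 (o - 1 - s).toNat else none

/-- The total size of the blocks of a stack of tasks. -/
def totalSize (l : List (ℕ × List A)) : ℕ := (l.map Prod.fst).sum

variable {out k a₀}

theorem totalSize_cons (v : ℕ × List A) (l : List (ℕ × List A)) :
    totalSize (v :: l) = v.1 + totalSize l := by
  simp [totalSize]

theorem map_fst_serve (a : A) (l : List (ℕ × List A)) :
    (serve out a l).map Prod.fst = l.map Prod.fst := by
  induction l with
  | nil => rfl
  | cons v l ih =>
    obtain ⟨n, w⟩ := v
    simp only [serve]
    split <;> simp [ih]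

theorem totalSize_serve (a : A) (l : List (ℕ × List A)) :
    totalSize (serve out a l) = totalSize l := by
  rw [totalSize, map_fst_serve, totalSize]

theorem exists_serve_append (a : A) (l₁ l₂ : List (ℕ × List A)) :
    ∃ l₃, serve out a (l₁ ++ l₂) = serve out a l₁ ++ l₃ := by
  induction l₁ with
  | nil => exact ⟨_, rfl⟩
  | cons v l ih =>
    obtain ⟨n, w⟩ := v
    simp only [serve, List.cons_append]
    split
    · exact ⟨l₂, rfl⟩
    · obtain ⟨l₃, h⟩ := ih
      exact ⟨l₃, by rw [h]; rfl⟩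

theorem machineStep_fst (mk : Prop) (a : A) (σ : ℕ × List (ℕ × List A)) :
    (machineStep out mk a σ).1 = 0 ∨ (machineStep out mk a σ).1 = σ.1 + 1 ∧ σ.1 + 1 ≠ L := by
  unfold machineStep
  split_ifs with h
  · exact Or.inl rfl
  · exact Or.inr ⟨rfl, fun h' => h (Or.inl h')⟩

theorem machineStep_of_mk {mk : Prop} (h : mk) (a : A) (σ : ℕ × List (ℕ × List A)) :
    (machineStep out mk a σ).1 = 0 := by
  simp [machineStep, h]

theorem totalSize_machineStep (mk : Prop) (a : A) (σ : ℕ × List (ℕ × List A)) :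
    totalSize (machineStep out mk a σ).2 + (machineStep out mk a σ).1 =
      totalSize σ.2 + σ.1 + 1 := by
  unfold machineStep
  split_ifs
  · simp only [totalSize_cons, totalSize_serve]
    omega
  · simp only [totalSize_serve]
    omega

variable {x y : ℤ → A} {t₀ : ℤ}

theorem totalSize_run (x : ℤ → A) (t₀ : ℤ) (n : ℕ) :
    totalSize (run out k a₀ x t₀ n).2 + (run out k a₀ x t₀ n).1 = n := by
  induction n with
  | zero => rfl
  | succ n ih => rw [run, totalSize_machineStep, ih]

theorem run_fst_lt (hL : 0 < L) (x : ℤ → A) (t₀ : ℤ) (n : ℕ) : (run out k a₀ x t₀ n).1 < L := by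
  induction n with
  | zero => exact hL
  | succ n ih =>
    rw [run]
    rcases machineStep_fst (out := out) (Marker k a₀ x (t₀ + n)) (x (t₀ + n))
      (run out k a₀ x t₀ n) with h | h <;> omega

theorem run_congr {n : ℕ} (h : ∀ i : ℤ, t₀ - k ≤ i → i < t₀ + n → x i = y i) :
    run out k a₀ x t₀ n = run out k a₀ y t₀ n := by
  induction n with
  | zero => rfl
  | succ n ih =>
    push_cast at h
    rw [run, run, ih fun i hi hi' => h i hi (by omega), h (t₀ + n) (by omega) (by omega),
      propext (Marker.congr (a₀ := a₀) fun i hi hi' => h i (by omega) (by omega))]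

theorem run_shift (x : ℤ → A) (t₀ : ℤ) (n : ℕ) :
    run out k a₀ (shift x) t₀ n = run out k a₀ x (t₀ + 1) n := by
  induction n with
  | zero => rfl
  | succ n ih =>
    have h : Marker k a₀ (shift x) (t₀ + n) ↔ Marker k a₀ x (t₀ + 1 + n) :=
      forall₂_congr fun i _ => by
        rw [shift, show t₀ + n - i + 1 = t₀ + 1 + n - i by ring]
    rw [run, run, ih, propext h, shift, show t₀ + n + 1 = t₀ + 1 + n by ring]

theorem run_fst_sub (x : ℤ → A) (t₀ : ℤ) (n : ℕ) :
    ∃ m, m + (run out k a₀ x t₀ n).1 = n ∧ (run out k a₀ x t₀ m).1 = 0 := by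
  induction n with
  | zero => exact ⟨0, rfl, rfl⟩
  | succ n ih =>
    obtain ⟨m, hm, hm0⟩ := ih
    rcases machineStep_fst (out := out) (Marker k a₀ x (t₀ + n)) (x (t₀ + n))
      (run out k a₀ x t₀ n) with h | ⟨h, -⟩
    · exact ⟨n + 1, by rw [run, h], by rw [run, h]⟩
    · exact ⟨m, by rw [run, h]; omega, hm0⟩

/-- Once a block is closed, the machine forgets its past. -/
theorem run_add {n₀ : ℕ} (h : (run out k a₀ x t₀ n₀).1 = 0) (n : ℕ) :
    ∃ l, run out k a₀ x t₀ (n₀ + n) = ((run out k a₀ x (t₀ + n₀) n).1,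
      (run out k a₀ x (t₀ + n₀) n).2 ++ l) := by
  induction n with
  | zero => exact ⟨(run out k a₀ x t₀ n₀).2, Prod.ext h rfl⟩
  | succ n ih =>
    obtain ⟨l, hl⟩ := ih
    rw [← add_assoc, run, hl, run]
    push_cast
    rw [← add_assoc]
    obtain ⟨l', hl'⟩ := exists_serve_append (out := out) (x (t₀ + n₀ + n))
      (run out k a₀ x (t₀ + n₀) n).2 l
    refine ⟨l', ?_⟩
    unfold machineStep
    simp only [hl']
    split_ifs <;> rfl

variable [NeZero L]

theorem lookup_append {l₁ : List (ℕ × List A)} {e : ℕ} (h : e < totalSize l₁)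
    (l₂ : List (ℕ × List A)) : lookup out (l₁ ++ l₂) e = lookup out l₁ e := by
  induction l₁ generalizing e with
  | nil => simp [totalSize] at h
  | cons v l ih =>
    obtain ⟨n, w⟩ := v
    rw [totalSize_cons] at h
    simp only [List.cons_append, lookup]
    split_ifs with h'
    · rfl
    · exact ih (by dsimp only at h; omega)

theorem lookup_serve {l : List (ℕ × List A)} {e : ℕ} {b : B} (a : A)
    (h : lookup out l e = some b) : lookup out (serve out a l) e = some b := by
  induction l generalizing e with
  | nil => simp [lookup] at h
  | cons v l ih =>
    obtain ⟨n, w⟩ := v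
    simp only [serve]
    simp only [lookup] at h
    split
    · next hw =>
      rw [hw] at h
      simp only [lookup]
      split_ifs at h ⊢ with h'
      · simp at h
      · exact h
    · simp only [lookup]
      split_ifs at h ⊢ with h'
      · exact h
      · exact ih h

theorem lookup_ne_none {l : List (ℕ × List A)} {e : ℕ} (h : Resolved out l)
    (he : e < totalSize l) : lookup out l e ≠ none := by
  induction l generalizing e with
  | nil => simp [totalSize] at he
  | cons v l ih =>
    obtain ⟨n, w⟩ := v
    rw [totalSize_cons] at he
    simp only [lookup]
    split_ifs with h'
    · simpa using h (n, w) (by simp)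
    · exact ih (fun v hv => h v (by simp [hv])) (by dsimp only at he; omega)

theorem siteOut_shift (x : ℤ → A) (t₀ : ℤ) (n : ℕ) (s : ℤ) :
    siteOut out k a₀ (shift x) t₀ n s = siteOut out k a₀ x (t₀ + 1) n (s + 1) := by
  simp only [siteOut, run_shift]
  congr 1
  · simp only [eq_iff_iff]
    omega
  · congr 2
    omega

theorem siteOut_congr {n : ℕ} (h : ∀ i : ℤ, t₀ - k ≤ i → i < t₀ + n → x i = y i) (s : ℤ) :
    siteOut out k a₀ x t₀ n s = siteOut out k a₀ y t₀ n s := by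
  simp only [siteOut, run_congr h]

theorem siteOut_add {n₀ : ℕ} (h : (run out k a₀ x t₀ n₀).1 = 0) (n : ℕ) {s : ℤ}
    (hs : t₀ + n₀ ≤ s) : siteOut out k a₀ x t₀ (n₀ + n) s = siteOut out k a₀ x (t₀ + n₀) n s := by
  obtain ⟨l, hl⟩ := run_add h n
  simp only [siteOut, hl]
  push_cast
  rw [← add_assoc]
  split_ifs with hso
  · refine lookup_append ?_ l
    have := totalSize_run (out := out) (k := k) (a₀ := a₀) x (t₀ + n₀) n
    omega
  · rfl

theorem siteOut_succ {n : ℕ} {s : ℤ} {b : B} (h : siteOut out k a₀ x t₀ n s = some b) :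
    siteOut out k a₀ x t₀ (n + 1) s = some b := by
  simp only [siteOut] at h ⊢
  rw [run, machineStep]
  generalize run out k a₀ x t₀ n = σ at *
  split_ifs at h with hs
  replace h := lookup_serve (x (t₀ + n)) h
  push_cast
  split_ifs with h1 h2 h2
  · simp only [lookup]
    rw [if_neg (by omega)]
    convert h using 2
    omega
  · dsimp only at h2
    omega
  · dsimp only
    convert h using 2
    push_cast
    omega
  · dsimp only at h2
    push_cast at h2
    omega

theorem siteOut_mono {n n' : ℕ} (hn : n ≤ n') {s : ℤ} {b : B}
    (h : siteOut out k a₀ x t₀ n s = some b) : siteOut out k a₀ x t₀ n' s = some b := by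
  induction n', hn using Nat.le_induction with
  | base => exact h
  | succ m _ ih => exact siteOut_succ ih

theorem siteOut_ne_none {n : ℕ} {s : ℤ} (h : Resolved out (run out k a₀ x t₀ n).2)
    (hs : t₀ ≤ s) (hs' : s + L ≤ t₀ + n) : siteOut out k a₀ x t₀ n s ≠ none := by
  have h1 := run_fst_lt (out := out) (k := k) (a₀ := a₀) (NeZero.pos L) x t₀ n
  have h2 := totalSize_run (out := out) (k := k) (a₀ := a₀) x t₀ n
  simp only [siteOut]
  rw [if_pos (by omega)]
  exact lookup_ne_none h (by omega)

end Machine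

section Drift

variable {A B : Type*} {L : ℕ}

/-- The total potential of a stack of tasks. -/
def potSum (pot : List A → ℝ) (l : List (ℕ × List A)) : ℝ := (l.map fun v => pot v.2).sum

/-- Some task is unfinished at every time from `M` to `n`. -/
def Busy (out : List A → Option (Fin L → B)) (k : ℕ) (a₀ : A) (M : ℕ) (x : ℤ → A) (t₀ : ℤ)
    (n : ℕ) : Prop :=
  ∀ n' ≤ n, M ≤ n' → ¬Resolved out (run out k a₀ x t₀ n').2

variable {out : List A → Option (Fin L → B)} {k : ℕ} {a₀ : A} {M : ℕ} {t₀ : ℤ} {pot : List A → ℝ}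

theorem potSum_cons (v : ℕ × List A) (l : List (ℕ × List A)) :
    potSum pot (v :: l) = pot v.2 + potSum pot l := by
  simp [potSum]

theorem potSum_nonneg (hpot : ∀ w, 0 ≤ pot w) (l : List (ℕ × List A)) : 0 ≤ potSum pot l :=
  List.sum_nonneg fun r hr => by
    obtain ⟨v, -, rfl⟩ := List.mem_map.1 hr
    exact hpot _

theorem Busy.anti {x : ℤ → A} {n n' : ℕ} (hn : n ≤ n') (h : Busy out k a₀ M x t₀ n') :
    Busy out k a₀ M x t₀ n :=
  fun m hm => h m (hm.trans hn)

theorem Busy.congr {x y : ℤ → A} {n : ℕ} (h : ∀ i : ℤ, t₀ - k ≤ i → i < t₀ + n → x i = y i) :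
    Busy out k a₀ M x t₀ n ↔ Busy out k a₀ M y t₀ n :=
  forall₂_congr fun n' hn' => by rw [run_congr fun i hi hi' => h i hi (by omega)]

theorem FinDep.run (t₀ : ℤ) (n : ℕ) : FinDep fun x => run out k a₀ x t₀ n :=
  ⟨Finset.Icc (t₀ - k) (t₀ + n), fun x y h =>
    run_congr fun i hi hi' => h i (by simp only [Finset.coe_Icc, Set.mem_Icc]; omega)⟩

theorem FinDep.busy (t₀ : ℤ) (n : ℕ) : FinDep fun x => Busy out k a₀ M x t₀ n :=
  ⟨Finset.Icc (t₀ - k) (t₀ + n), fun x y h => propext <|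
    Busy.congr fun i hi hi' => h i (by simp only [Finset.coe_Icc, Set.mem_Icc]; omega)⟩

theorem run_update (x : ℤ → A) (t₀ : ℤ) (n : ℕ) (a : A) :
    _root_.run out k a₀ (Function.update x (t₀ + n) a) t₀ n = _root_.run out k a₀ x t₀ n :=
  run_congr fun i _ hi => Function.update_of_ne (by omega) _ _

theorem busy_update (x : ℤ → A) (t₀ : ℤ) (n : ℕ) (a : A) :
    Busy out k a₀ M (Function.update x (t₀ + n) a) t₀ n ↔ Busy out k a₀ M x t₀ n :=
  Busy.congr fun i _ hi => Function.update_of_ne (by omega) _ _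

theorem potSum_machineStep_le {β : ℝ} (hβ : 0 ≤ β) (hpot0 : 0 ≤ pot []) (hβL : pot [] ≤ β * L)
    (mk : Prop) (a : A) (σ : ℕ × List (ℕ × List A)) :
    potSum pot (machineStep out mk a σ).2 + β * (machineStep out mk a σ).1 ≤
      potSum pot (serve out a σ.2) + β * (σ.1 + 1) + pot [] * ind mk := by
  unfold machineStep
  have h0 : 0 ≤ β * (σ.1 + 1) := by positivity
  split_ifs with h
  · simp only [potSum_cons, CharP.cast_eq_zero, mul_zero, add_zero]
    rcases h with h | h
    · have : pot [] ≤ β * (σ.1 + 1) := by rw [← h] at hβL; exact_mod_cast hβL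
      have := mul_nonneg hpot0 (ind_nonneg mk)
      linarith
    · rw [ind_of h]
      linarith
  · rw [ind_of_not fun hm => h (Or.inr hm)]
    push_cast
    simp

variable [Fintype A] {p : A → ℝ}

theorem sum_potSum_serve_le (hp : IsProbVector p)
    (hstep : ∀ w, out w = none → ∑ a, p a * pot (w ++ [a]) + 1 ≤ pot w)
    (l : List (ℕ × List A)) :
    ∑ a, p a * potSum pot (serve out a l) + ind (¬Resolved out l) ≤ potSum pot l := by
  induction l with
  | nil => simp [serve, potSum, Resolved, ind]
  | cons v l ih =>
    obtain ⟨n, w⟩ := v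
    simp only [serve]
    cases hw : out w with
    | none =>
      have := ind_le_one (¬Resolved out ((n, w) :: l))
      have := hstep w hw
      simp only [potSum_cons, mul_add, Finset.sum_add_distrib, ← Finset.sum_mul, hp.2]
      linarith
    | some y =>
      have h1 : ind (¬Resolved out ((n, w) :: l)) ≤ ind (¬Resolved out l) :=
        ind_mono <| mt fun h v hv => by
          rcases List.mem_cons.1 hv with rfl | hv
          · simp [hw]
          · exact h v hv
      simp only [potSum_cons, mul_add, Finset.sum_add_distrib, ← Finset.sum_mul, hp.2]
      linarith

variable [MeasurableSpace A] [DiscreteMeasurableSpace A] {μ : Measure (ℤ → A)}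

theorem integral_potSum_succ_le (hp : IsProbVector p) (hμ : IsBernoulliMeasure μ p)
    (hpot : ∀ w, 0 ≤ pot w)
    (hstep : ∀ w, out w = none → ∑ a, p a * pot (w ++ [a]) + 1 ≤ pot w)
    {β : ℝ} (hβ : 0 ≤ β) (hβL : pot [] ≤ β * L) (t₀ : ℤ) (n : ℕ) :
    ∫ x, (potSum pot (run out k a₀ x t₀ (n + 1)).2 + β * (run out k a₀ x t₀ (n + 1)).1) *
        ind (Busy out k a₀ M x t₀ (n + 1)) ∂μ + (1 - β) * ∫ x, ind (Busy out k a₀ M x t₀ n) ∂μ ≤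
      ∫ x, (potSum pot (run out k a₀ x t₀ n).2 + β * (run out k a₀ x t₀ n).1) *
        ind (Busy out k a₀ M x t₀ n) ∂μ +
      pot [] * p a₀ ^ k * ∫ x, ind (Busy out k a₀ M x t₀ (n - k)) ∂μ + ind (n < M) := by
  have : Nonempty A := ⟨a₀⟩
  have := hμ.isProbabilityMeasure
  have hB (m : ℕ) : FinDep fun x => ind (Busy out k a₀ M x t₀ m) := (FinDep.busy t₀ m).comp ind
  have hR (m : ℕ) : FinDep fun x => run out k a₀ x t₀ m := FinDep.run t₀ m
  have hV (m : ℕ) : FinDep fun x => (potSum pot (run out k a₀ x t₀ m).2 +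
      β * (run out k a₀ x t₀ m).1) * ind (Busy out k a₀ M x t₀ m) :=
    (hR m).comp₂ (hB m) fun σ r => (potSum pot σ.2 + β * σ.1) * r
  have hS : FinDep fun x => potSum pot (serve out (x (t₀ + n)) (run out k a₀ x t₀ n).2) *
      ind (Busy out k a₀ M x t₀ n) :=
    ((FinDep.apply (t₀ + n)).comp₂ (hR n) fun a σ => potSum pot (serve out a σ.2)).comp₂ (hB n)
      fun r r' => r * r'
  have hC : FinDep fun x => β * ((run out k a₀ x t₀ n).1 + 1) * ind (Busy out k a₀ M x t₀ n) :=
    (hR n).comp₂ (hB n) fun σ r => β * (σ.1 + 1) * r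
  have hK : FinDep fun x => ind (Busy out k a₀ M x t₀ (n - k)) * ind (Marker k a₀ x (t₀ + n)) :=
    (hB _).comp₂ (FinDep.marker _) fun r P => r * ind P
  have h1 : ∫ x, (potSum pot (run out k a₀ x t₀ (n + 1)).2 +
        β * (run out k a₀ x t₀ (n + 1)).1) * ind (Busy out k a₀ M x t₀ (n + 1)) ∂μ ≤
      ∫ x, (potSum pot (serve out (x (t₀ + n)) (run out k a₀ x t₀ n).2) *
          ind (Busy out k a₀ M x t₀ n) +
        β * ((run out k a₀ x t₀ n).1 + 1) * ind (Busy out k a₀ M x t₀ n) +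
        pot [] * (ind (Busy out k a₀ M x t₀ (n - k)) * ind (Marker k a₀ x (t₀ + n)))) ∂μ := by
    refine integral_mono ((hV _).integrable μ) (((hS.integrable μ).add (hC.integrable μ)).add
      ((hK.integrable μ).const_mul _)) fun x => ?_
    have e1 := potSum_machineStep_le (out := out) hβ (hpot []) hβL (Marker k a₀ x (t₀ + n))
      (x (t₀ + n)) (run out k a₀ x t₀ n)
    have e2 : ind (Busy out k a₀ M x t₀ (n + 1)) ≤ ind (Busy out k a₀ M x t₀ n) :=
      ind_mono (Busy.anti n.le_succ)
    have e3 : ind (Busy out k a₀ M x t₀ n) ≤ ind (Busy out k a₀ M x t₀ (n - k)) :=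
      ind_mono (Busy.anti (n.sub_le k))
    have e4 : 0 ≤ potSum pot (serve out (x (t₀ + n)) (run out k a₀ x t₀ n).2) +
        β * ((run out k a₀ x t₀ n).1 + 1) + pot [] * ind (Marker k a₀ x (t₀ + n)) := by
      have := potSum_nonneg hpot (serve out (x (t₀ + n)) (run out k a₀ x t₀ n).2)
      have := mul_nonneg (hpot []) (ind_nonneg (Marker k a₀ x (t₀ + n)))
      positivity
    refine (mul_le_mul e1 e2 (ind_nonneg _) e4).trans ?_
    have e5 := mul_le_mul_of_nonneg_left e3
      (mul_nonneg (hpot []) (ind_nonneg (Marker k a₀ x (t₀ + n))))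
    linarith
  have h2 : ∫ x, potSum pot (serve out (x (t₀ + n)) (run out k a₀ x t₀ n).2) *
        ind (Busy out k a₀ M x t₀ n) ∂μ ≤
      ∫ x, ((potSum pot (run out k a₀ x t₀ n).2 + β * (run out k a₀ x t₀ n).1) *
        ind (Busy out k a₀ M x t₀ n) -
        β * ((run out k a₀ x t₀ n).1 + 1) * ind (Busy out k a₀ M x t₀ n) -
        (1 - β) * ind (Busy out k a₀ M x t₀ n) + ind (n < M)) ∂μ := by
    rw [hμ.integral_resample hp (t₀ + n) hS]
    simp only [run_update, busy_update, Function.update_self]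
    refine integral_mono (FinDep.integrable ((hR n).comp₂ (hB n)
      fun σ r => ∑ a, p a * (potSum pot (serve out a σ.2) * r)) μ)
      (((((hV n).integrable μ).sub (hC.integrable μ)).sub (((hB n).integrable μ).const_mul _)).add
        (integrable_const _)) fun x => ?_
    simp only [← mul_assoc, ← Finset.sum_mul]
    have e1 := sum_potSum_serve_le hp hstep (run out k a₀ x t₀ n).2
    by_cases hb : Busy out k a₀ M x t₀ n
    · have e2 : 1 ≤ ind (¬Resolved out (run out k a₀ x t₀ n).2) + ind (n < M) := by
        by_cases hn : n < M
        · rw [ind_of hn]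
          linarith [ind_nonneg (¬Resolved out (run out k a₀ x t₀ n).2)]
        · rw [ind_of (hb n le_rfl (not_lt.1 hn))]
          linarith [ind_nonneg (n < M)]
      rw [ind_of hb]
      linarith
    · rw [ind_of_not hb]
      linarith [ind_nonneg (n < M)]
  have h3 : ∫ x, ind (Busy out k a₀ M x t₀ (n - k)) * ind (Marker k a₀ x (t₀ + n)) ∂μ =
      p a₀ ^ k * ∫ x, ind (Busy out k a₀ M x t₀ (n - k)) ∂μ := by
    refine hμ.integral_mul_marker hp (hB _) fun x y hxy => ?_
    rcases le_total k n with hk | hk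
    · exact congrArg ind <| propext <| Busy.congr fun i hi hi' => hxy i (Or.inl (by omega))
    · rw [Nat.sub_eq_zero_of_le hk]
      exact congrArg ind <| propext <| forall₂_congr fun m hm => by
        rw [Nat.le_zero.1 hm]
        rfl
  rw [integral_add ((hS.comp₂ hC fun r r' => r + r').integrable μ) ((hK.integrable μ).const_mul _),
    integral_add (hS.integrable μ) (hC.integrable μ), integral_const_mul, h3] at h1
  have hVC := (hV n).comp₂ hC fun r r' => r - r'
  rw [integral_add ((hVC.comp₂ (hB n) fun r r' => r - (1 - β) * r').integrable μ)
      (integrable_const _),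
    integral_sub (hVC.integrable μ) (((hB n).integrable μ).const_mul _),
    integral_sub ((hV n).integrable μ) (hC.integrable μ), integral_const_mul] at h2
  simp only [integral_const, probReal_univ, smul_eq_mul, one_mul] at h2
  rw [← mul_assoc] at h1
  linarith

/-- The expected time until all tasks are finished is bounded uniformly in the starting time. -/
theorem exists_sum_integral_busy_le (hp : IsProbVector p) (hμ : IsBernoulliMeasure μ p)
    (hpot : ∀ w, 0 ≤ pot w)
    (hstep : ∀ w, out w = none → ∑ a, p a * pot (w ++ [a]) + 1 ≤ pot w)
    {β : ℝ} (hβ : 0 ≤ β) (hβL : pot [] ≤ β * L) (hβ1 : β < 1)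
    (hk : pot [] * p a₀ ^ k ≤ (1 - β) / 2) (M : ℕ) :
    ∃ K : ℝ, ∀ (t₀ : ℤ) (N : ℕ),
      ∑ n ∈ Finset.range N, ∫ x, ind (Busy out k a₀ M x t₀ n) ∂μ ≤ K := by
  have : Nonempty A := ⟨a₀⟩
  have := hμ.isProbabilityMeasure
  refine ⟨2 / (1 - β) * (M + (1 - β) / 2 * k), fun t₀ N => ?_⟩
  set u : ℕ → ℝ := fun n => ∫ x, ind (Busy out k a₀ M x t₀ n) ∂μ with hu
  set v : ℕ → ℝ := fun n => ∫ x, (potSum pot (run out k a₀ x t₀ n).2 +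
    β * (run out k a₀ x t₀ n).1) * ind (Busy out k a₀ M x t₀ n) ∂μ with hv
  have hu0 (n : ℕ) : 0 ≤ u n := integral_nonneg fun x => ind_nonneg _
  have hu1 (n : ℕ) : u n ≤ 1 := by
    refine (integral_mono (((FinDep.busy t₀ n).comp ind).integrable μ) (integrable_const 1)
      fun x => ind_le_one _).trans ?_
    simp
  have hv0 : v 0 = 0 := by simp [hv, run, potSum]
  have hvn (n : ℕ) : 0 ≤ v n := integral_nonneg fun x =>
    mul_nonneg (add_nonneg (potSum_nonneg hpot _) (by positivity)) (ind_nonneg _)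
  have hstep' (n : ℕ) : v (n + 1) + (1 - β) * u n ≤
      v n + (1 - β) / 2 * u (n - k) + ind (n < M) :=
    (integral_potSum_succ_le hp hμ hpot hstep hβ hβL t₀ n).trans
      (by gcongr; exact hu0 _)
  have hsum : v N + (1 - β) * ∑ n ∈ Finset.range N, u n ≤
      (1 - β) / 2 * ∑ n ∈ Finset.range N, u (n - k) + ∑ n ∈ Finset.range N, ind (n < M) := by
    clear_value u v
    induction N with
    | zero => simp [hv0]
    | succ N ih =>
      simp only [Finset.sum_range_succ, mul_add]
      linarith [hstep' N]
  have hM : ∑ n ∈ Finset.range N, ind (n < M) ≤ M := by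
    suffices ∑ n ∈ Finset.range N, ind (n < M) ≤ min (M : ℝ) N from this.trans (min_le_left _ _)
    clear hsum
    induction N with
    | zero => simp
    | succ N ih =>
      rw [Finset.sum_range_succ]
      by_cases h : N < M
      · have h' : ((N + 1 : ℕ) : ℝ) ≤ M := by exact_mod_cast h
        rw [ind_of h, min_eq_right h']
        push_cast
        linarith [min_le_right (M : ℝ) N]
      · rw [ind_of_not h, add_zero]
        refine ih.trans (min_le_min_left _ ?_)
        push_cast
        linarith
  have hshift : ∑ n ∈ Finset.range N, u (n - k) ≤ k + ∑ n ∈ Finset.range N, u n := by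
    rcases le_total N k with h | h
    · have e1 : ∑ n ∈ Finset.range N, u (n - k) ≤ ∑ n ∈ Finset.range N, (1 : ℝ) :=
        Finset.sum_le_sum fun n _ => hu1 _
      have e2 := Finset.sum_nonneg fun n (_ : n ∈ Finset.range N) => hu0 n
      have e3 : (N : ℝ) ≤ k := by exact_mod_cast h
      simp only [Finset.sum_const, Finset.card_range, nsmul_eq_mul, mul_one] at e1
      linarith
    · obtain ⟨m, rfl⟩ := Nat.exists_eq_add_of_le h
      rw [Finset.sum_range_add]
      have e1 : ∑ n ∈ Finset.range k, u (n - k) ≤ ∑ n ∈ Finset.range k, (1 : ℝ) :=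
        Finset.sum_le_sum fun n _ => hu1 _
      simp only [Finset.sum_const, Finset.card_range, nsmul_eq_mul, mul_one] at e1
      have e2 : ∑ n ∈ Finset.range m, u n ≤ ∑ n ∈ Finset.range (k + m), u n :=
        Finset.sum_le_sum_of_subset_of_nonneg (by simp) fun n _ _ => hu0 n
      simp only [Nat.add_sub_cancel_left]
      linarith
  have h1 : 0 < 1 - β := by linarith
  have h2 := mul_le_mul_of_nonneg_left hshift (half_pos h1).le
  have h3 := hvn N
  rw [div_mul_eq_mul_div, le_div_iff₀ h1]
  linarith

end Drift

section Law

variable {A B : Type*} {L : ℕ} [NeZero L] [Fintype B]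

/-- The conditional probability that a block of size `n` starting at `s₀`, on behalf of which the
word `w` has been read, agrees with `z` on `F`. -/
def blockWeight (law : List A → (Fin L → B) → ℝ) (F : Finset ℤ) (z : ℤ → B) (s₀ : ℤ) (n : ℕ)
    (w : List A) : ℝ :=
  ∑ y, law w y * ∏ s ∈ F with s₀ ≤ s ∧ s < s₀ + n, ind (y (Fin.ofNat L (s - s₀).toNat) = z s)

/-- The conditional probability that the blocks of a stack of tasks ending at `o` agree with `z`
on `F`. -/
def stackWeight (law : List A → (Fin L → B) → ℝ) (F : Finset ℤ) (z : ℤ → B) :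
    ℤ → List (ℕ × List A) → ℝ
  | _, [] => 1
  | o, (n, w) :: l => blockWeight law F z (o - n) n w * stackWeight law F z (o - n) l

/-- The conditional probability, given a configuration at time `t`, that the output agrees with `z`
on `F`. -/
def configWeight (law : List A → (Fin L → B) → ℝ) (q : B → ℝ) (F : Finset ℤ) (z : ℤ → B) (t : ℤ)
    (σ : ℕ × List (ℕ × List A)) : ℝ :=
  stackWeight law F z (t - σ.1) σ.2 * ∏ s ∈ F with t - σ.1 ≤ s, q (z s)

theorem prod_ind (F : Finset ℤ) (P : ℤ → Prop) : ∏ s ∈ F, ind (P s) = ind (∀ s ∈ F, P s) := by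
  by_cases h : ∀ s ∈ F, P s
  · rw [ind_of h]
    exact Finset.prod_eq_one fun s hs => ind_of (h s hs)
  · rw [ind_of_not h]
    push Not at h
    obtain ⟨s, hs, hP⟩ := h
    exact Finset.prod_eq_zero hs (ind_of_not hP)

variable {law : List A → (Fin L → B) → ℝ} {out : List A → Option (Fin L → B)} {F : Finset ℤ}
  {z : ℤ → B} {q : B → ℝ}

theorem blockWeight_nonneg (hlaw : ∀ w y, 0 ≤ law w y) (s₀ : ℤ) (n : ℕ) (w : List A) :
    0 ≤ blockWeight law F z s₀ n w :=
  Finset.sum_nonneg fun y _ => mul_nonneg (hlaw w y) (Finset.prod_nonneg fun _ _ => ind_nonneg _)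

theorem blockWeight_le_one (hlaw : ∀ w y, 0 ≤ law w y) (hsum : ∀ w, ∑ y, law w y = 1) (s₀ : ℤ)
    (n : ℕ) (w : List A) : blockWeight law F z s₀ n w ≤ 1 := by
  rw [← hsum w]
  exact Finset.sum_le_sum fun y _ => mul_le_of_le_one_right (hlaw w y)
    (Finset.prod_le_one (fun _ _ => ind_nonneg _) fun _ _ => ind_le_one _)

theorem stackWeight_nonneg (hlaw : ∀ w y, 0 ≤ law w y) (o : ℤ) (l : List (ℕ × List A)) :
    0 ≤ stackWeight law F z o l := by
  induction l generalizing o with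
  | nil => exact zero_le_one
  | cons v l ih => exact mul_nonneg (blockWeight_nonneg hlaw _ _ _) (ih _)

theorem stackWeight_le_one (hlaw : ∀ w y, 0 ≤ law w y) (hsum : ∀ w, ∑ y, law w y = 1) (o : ℤ)
    (l : List (ℕ × List A)) : stackWeight law F z o l ≤ 1 := by
  induction l generalizing o with
  | nil => exact le_rfl
  | cons v l ih =>
    exact mul_le_one₀ (blockWeight_le_one hlaw hsum _ _ _) (stackWeight_nonneg hlaw _ _) (ih _)

theorem blockWeight_nil (hq : ∑ b, q b = 1)
    (hlaw : law [] = fun y => ∏ i, q (y i)) (s₀ : ℤ) {n : ℕ} (hn : n ≤ L) :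
    blockWeight law F z s₀ n [] = ∏ s ∈ F with s₀ ≤ s ∧ s < s₀ + n, q (z s) := by
  classical
  set G := F.filter fun s => s₀ ≤ s ∧ s < s₀ + n with hG
  have conv (h : ℤ → Fin L → ℝ) : ∏ s ∈ G, h s (Fin.ofNat L (s - s₀).toNat) =
      ∏ i : Fin L, if s₀ + (i : ℕ) ∈ G then h (s₀ + (i : ℕ)) i else 1 := by
    rw [← Finset.prod_filter]
    have hval (s : ℤ) (hs : s ∈ G) : s₀ + (Fin.ofNat L (s - s₀).toNat : ℕ) = s := by
      simp only [hG, Finset.mem_filter] at hs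
      rw [Fin.val_ofNat, Nat.mod_eq_of_lt (by omega)]
      omega
    refine Finset.prod_bij' (fun s _ => Fin.ofNat L (s - s₀).toNat) (fun i _ => s₀ + (i : ℕ))
      (fun s hs => ?_) (fun i hi => (Finset.mem_filter.1 hi).2) hval (fun i _ => ?_) fun s hs => ?_
    · rw [Finset.mem_filter, hval s hs]
      exact ⟨Finset.mem_univ _, hs⟩
    · ext
      simp
    · rw [hval s hs]
  have hsum (i : Fin L) : ∑ b, q b * (if s₀ + (i : ℕ) ∈ G then ind (b = z (s₀ + (i : ℕ))) else 1) =
      if s₀ + (i : ℕ) ∈ G then q (z (s₀ + (i : ℕ))) else 1 := by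
    split_ifs
    · simp [ind]
    · simp [hq]
  calc blockWeight law F z s₀ n []
      = ∑ y : Fin L → B, ∏ i, q (y i) *
          (if s₀ + (i : ℕ) ∈ G then ind (y i = z (s₀ + (i : ℕ))) else 1) := by
        refine Finset.sum_congr rfl fun y _ => ?_
        rw [hlaw, Finset.prod_mul_distrib, ← conv fun s i => ind (y i = z s)]
    _ = ∏ i : Fin L, ∑ b, q b * (if s₀ + (i : ℕ) ∈ G then ind (b = z (s₀ + (i : ℕ))) else 1) := by
        rw [Finset.prod_univ_sum, Fintype.piFinset_univ]
    _ = ∏ s ∈ G, q (z s) := by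
        simp only [hsum]
        exact (conv fun s _ => q (z s)).symm

theorem blockWeight_of_some [DecidableEq B] {w : List A} {y : Fin L → B}
    (h : law w = Pi.single y 1) (s₀ : ℤ) (n : ℕ) : blockWeight law F z s₀ n w =
      ∏ s ∈ F with s₀ ≤ s ∧ s < s₀ + n, ind (y (Fin.ofNat L (s - s₀).toNat) = z s) := by
  rw [blockWeight, h, Finset.sum_eq_single y]
  · simp
  · intro y' _ hy'
    simp [hy']
  · simp

theorem prod_filter_Ico_mul (F : Finset ℤ) (h : ℤ → ℝ) {a b c : ℤ} (hab : a ≤ b) (hbc : b ≤ c) :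
    ((∏ s ∈ F with b ≤ s ∧ s < c, h s) * ∏ s ∈ F with a ≤ s ∧ s < b, h s) =
      ∏ s ∈ F with a ≤ s ∧ s < c, h s := by
  classical
  rw [← Finset.prod_union]
  · congr 1
    ext s
    simp only [Finset.mem_union, Finset.mem_filter]
    constructor
    · rintro (h | h)
      all_goals exact ⟨h.1, by omega⟩
    · rintro ⟨h, h'⟩
      rcases le_or_gt b s with hs | hs
      · exact Or.inl ⟨h, by omega⟩
      · exact Or.inr ⟨h, by omega⟩
  · rw [Finset.disjoint_left]
    simp only [Finset.mem_filter]
    omega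

/-- When all the letters on `F` are known, the weight of a stack is an indicator. -/
theorem stackWeight_eq_prod [DecidableEq B] (hsum : ∀ w, ∑ y, law w y = 1)
    (hdone : ∀ w y, out w = some y → law w = Pi.single y 1) {b : ℤ → B} {o : ℤ}
    {l : List (ℕ × List A)} (h : ∀ s ∈ F, o - totalSize l ≤ s → s < o →
      lookup out l (o - 1 - s).toNat = some (b s)) :
    stackWeight law F z o l = ∏ s ∈ F with o - totalSize l ≤ s ∧ s < o, ind (b s = z s) := by
  induction l generalizing o with
  | nil =>
    rw [Finset.filter_eq_empty_iff.2]
    · rfl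
    · simp only [totalSize, List.map_nil, List.sum_nil]
      omega
  | cons v l ih =>
    obtain ⟨n, w⟩ := v
    rw [totalSize_cons] at h ⊢
    push_cast at h ⊢
    rw [stackWeight, ih]
    · have hblock : blockWeight law F z (o - n) n w =
          ∏ s ∈ F with o - n ≤ s ∧ s < o, ind (b s = z s) := by
        by_cases hF : ∃ s ∈ F, o - n ≤ s ∧ s < o
        · obtain ⟨s, hs, hs1, hs2⟩ := hF
          have h1 := h s hs (by omega) hs2
          rw [lookup, if_pos (by omega)] at h1
          obtain ⟨y, hy, -⟩ := Option.map_eq_some_iff.1 h1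
          rw [blockWeight_of_some (hdone w y hy)]
          rw [sub_add_cancel]
          refine Finset.prod_congr rfl fun s hs => ?_
          simp only [Finset.mem_filter] at hs
          have h2 := h s hs.1 (by omega) hs.2.2
          rw [lookup, if_pos (by omega), hy, Option.map_some, Option.some_inj] at h2
          rw [← h2, show n - 1 - (o - 1 - s).toNat = (s - (o - n)).toNat by omega]
        · have h1 : F.filter (fun s => o - n ≤ s ∧ s < o) = ∅ :=
            Finset.filter_eq_empty_iff.2 fun s hs hs' => hF ⟨s, hs, hs'⟩
          rw [blockWeight, sub_add_cancel, h1]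
          simpa using hsum w
      rw [hblock, sub_sub, prod_filter_Ico_mul _ _ (by omega) (by omega)]
    · intro s hs hs1 hs2
      have h1 := h s hs (by omega) (by omega)
      rw [lookup, if_neg (by omega)] at h1
      convert h1 using 2
      omega

theorem configWeight_machineStep (hq : ∑ b, q b = 1) (hlaw : law [] = fun y => ∏ i, q (y i))
    (t : ℤ) (mk : Prop) (a : A) {σ : ℕ × List (ℕ × List A)} (hσ : σ.1 < L) :
    configWeight law q F z (t + 1) (machineStep out mk a σ) =
      configWeight law q F z t (σ.1, serve out a σ.2) := by
  unfold configWeight machineStep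
  split_ifs with h
  · simp only [stackWeight]
    rw [blockWeight_nil hq hlaw _ hσ]
    push_cast
    rw [sub_zero, show t + 1 - (σ.1 + 1 : ℤ) = t - σ.1 by ring,
      show t - σ.1 + (σ.1 + 1 : ℤ) = t + 1 by ring,
      mul_comm (∏ s ∈ F with _ ∧ _, q (z s)), mul_assoc]
    congr 1
    classical
    rw [← Finset.prod_union]
    · congr 1
      ext s
      simp only [Finset.mem_union, Finset.mem_filter, ← and_or_left]
      refine and_congr_right fun _ => ?_
      omega
    · rw [Finset.disjoint_left]
      simp only [Finset.mem_filter]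
      omega
  · push_cast
    rw [show t + 1 - (σ.1 + 1 : ℤ) = t - σ.1 by ring]

theorem configWeight_run_of_siteOut [DecidableEq B] (hsum : ∀ w, ∑ y, law w y = 1)
    (hdone : ∀ w y, out w = some y → law w = Pi.single y 1) {k : ℕ} {a₀ : A} {x : ℤ → A} {t₀ : ℤ}
    {n : ℕ} {b : ℤ → B} (ht : ∀ s ∈ F, t₀ ≤ s)
    (h : ∀ s ∈ F, siteOut out k a₀ x t₀ n s = some (b s)) :
    configWeight law q F z (t₀ + n) (run out k a₀ x t₀ n) = ind (∀ s ∈ F, b s = z s) := by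
  have h1 := totalSize_run (out := out) (k := k) (a₀ := a₀) x t₀ n
  simp only [siteOut] at h
  have h2 : ∀ s ∈ F, s < t₀ + n - (run out k a₀ x t₀ n).1 := fun s hs => by
    by_contra hc
    have := h s hs
    rw [if_neg hc] at this
    simp at this
  rw [configWeight, stackWeight_eq_prod (b := b) hsum hdone, ← prod_ind,
    Finset.filter_true_of_mem, Finset.filter_false_of_mem, Finset.prod_empty, mul_one]
  · intro s hs
    exact not_le.2 (h2 s hs)
  · intro s hs
    have := ht s hs
    exact ⟨by omega, h2 s hs⟩
  · intro s hs _ hso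
    have := h s hs
    rwa [if_pos hso] at this

theorem configWeight_nonneg (hlaw : ∀ w y, 0 ≤ law w y) (hq : ∀ b, 0 ≤ q b) (t : ℤ)
    (σ : ℕ × List (ℕ × List A)) : 0 ≤ configWeight law q F z t σ :=
  mul_nonneg (stackWeight_nonneg hlaw _ _) (Finset.prod_nonneg fun _ _ => hq _)

theorem configWeight_le_one (hlaw : ∀ w y, 0 ≤ law w y) (hsum : ∀ w, ∑ y, law w y = 1)
    (hq : IsProbVector q) (t : ℤ) (σ : ℕ × List (ℕ × List A)) :
    configWeight law q F z t σ ≤ 1 :=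
  mul_le_one₀ (stackWeight_le_one hlaw hsum _ _) (Finset.prod_nonneg fun _ _ => (hq.1 _).le)
    (Finset.prod_le_one (fun _ _ => (hq.1 _).le) fun b _ => by
      rw [← hq.2]
      exact Finset.single_le_sum (fun b _ => (hq.1 b).le) (Finset.mem_univ (z b)))

variable [Fintype A] {p : A → ℝ}

theorem sum_stackWeight_serve (hp : IsProbVector p)
    (hstep : ∀ w, out w = none → ∀ y, ∑ a, p a * law (w ++ [a]) y = law w y) (o : ℤ)
    (l : List (ℕ × List A)) :
    ∑ a, p a * stackWeight law F z o (serve out a l) = stackWeight law F z o l := by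
  induction l generalizing o with
  | nil => simp [serve, stackWeight, hp.2]
  | cons v l ih =>
    obtain ⟨n, w⟩ := v
    simp only [serve]
    cases hw : out w with
    | none =>
      simp only [stackWeight, ← mul_assoc, ← Finset.sum_mul]
      congr 1
      simp only [blockWeight, Finset.mul_sum]
      rw [Finset.sum_comm]
      refine Finset.sum_congr rfl fun y _ => ?_
      rw [← hstep w hw y, Finset.sum_mul]
      exact Finset.sum_congr rfl fun a _ => by ring
    | some y =>
      simp only [stackWeight]
      rw [← ih, Finset.mul_sum]
      exact Finset.sum_congr rfl fun a _ => by ring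

variable [MeasurableSpace A] [DiscreteMeasurableSpace A] {μ : Measure (ℤ → A)}

theorem integral_configWeight_run (hp : IsProbVector p) (hμ : IsBernoulliMeasure μ p)
    (hq : ∑ b, q b = 1) (hlaw : law [] = fun y => ∏ i, q (y i))
    (hstep : ∀ w, out w = none → ∀ y, ∑ a, p a * law (w ++ [a]) y = law w y) (k : ℕ) (a₀ : A)
    {t₀ : ℤ} (ht : ∀ s ∈ F, t₀ ≤ s) (n : ℕ) :
    ∫ x, configWeight law q F z (t₀ + n) (run out k a₀ x t₀ n) ∂μ = ∏ s ∈ F, q (z s) := by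
  have : Nonempty A := ⟨a₀⟩
  have := hμ.isProbabilityMeasure
  induction n with
  | zero =>
    have h1 : F.filter (fun s => t₀ ≤ s) = F := Finset.filter_true_of_mem ht
    simp [run, configWeight, stackWeight, h1]
  | succ n ih =>
    rw [← ih]
    push_cast
    simp only [← add_assoc, run, configWeight_machineStep hq hlaw (t₀ + n) _ _
      (run_fst_lt (NeZero.pos L) _ t₀ n)]
    rw [hμ.integral_resample hp (t₀ + n)]
    · simp only [run_update, Function.update_self, configWeight, ← mul_assoc, ← Finset.sum_mul,
        sum_stackWeight_serve hp hstep]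
    · exact (FinDep.apply (t₀ + n)).comp₂ (FinDep.run t₀ n) fun a σ =>
        configWeight law q F z (t₀ + n) (σ.1, serve out a σ.2)

end Law

section FactorMap

variable {A B : Type*} {L : ℕ} [NeZero L] (out : List A → Option (Fin L → B)) (k : ℕ) (a₀ : A)

/-- Every machine started early enough eventually produces the letter `b` at the site `s`. -/
def Produces (x : ℤ → A) (s : ℤ) (b : B) : Prop :=
  ∃ T : ℤ, ∀ t₀ ≤ T, ∃ n, siteOut out k a₀ x t₀ n s = some b

open Classical in
/-- The map sending `x` to the sequence of letters produced by machines started early enough. -/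
def factorMap [Nonempty B] (x : ℤ → A) (s : ℤ) : B :=
  if h : ∃ b, Produces out k a₀ x s b then h.choose else Classical.arbitrary B

variable {out k a₀} {x y : ℤ → A} {s : ℤ} {b : B}

theorem Produces.unique {b' : B} (h : Produces out k a₀ x s b) (h' : Produces out k a₀ x s b') :
    b = b' := by
  obtain ⟨T, hT⟩ := h
  obtain ⟨T', hT'⟩ := h'
  obtain ⟨n, hn⟩ := hT (min T T') (min_le_left _ _)
  obtain ⟨n', hn'⟩ := hT' (min T T') (min_le_right _ _)
  have h1 := siteOut_mono (le_max_left n n') hn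
  rw [siteOut_mono (le_max_right n n') hn'] at h1
  exact (Option.some_inj.1 h1).symm

theorem Produces.factorMap_eq [Nonempty B] (h : Produces out k a₀ x s b) :
    factorMap out k a₀ x s = b := by
  have h' : ∃ b, Produces out k a₀ x s b := ⟨b, h⟩
  rw [factorMap, dif_pos h']
  exact h'.choose_spec.unique h

theorem produces_shift : Produces out k a₀ (shift x) s b ↔ Produces out k a₀ x (s + 1) b := by
  simp only [Produces, siteOut_shift]
  constructor
  · rintro ⟨T, hT⟩
    refine ⟨T + 1, fun t₀ ht => ?_⟩
    simpa using hT (t₀ - 1) (by omega)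
  · rintro ⟨T, hT⟩
    exact ⟨T - 1, fun t₀ ht => hT _ (by omega)⟩

theorem factorMap_shift [Nonempty B] (x : ℤ → A) :
    factorMap out k a₀ (shift x) = shift (factorMap out k a₀ x) := by
  funext s
  by_cases hb : ∃ b, Produces out k a₀ (shift x) s b
  · obtain ⟨b, hb⟩ := hb
    exact hb.factorMap_eq.trans (produces_shift.1 hb).factorMap_eq.symm
  · have hb' : ¬∃ b, Produces out k a₀ x (s + 1) b := fun ⟨b, h⟩ => hb ⟨b, produces_shift.2 h⟩
    change factorMap out k a₀ (shift x) s = factorMap out k a₀ x (s + 1)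
    rw [factorMap, factorMap, dif_neg hb, dif_neg hb']

theorem siteOut_of_marker {m t₀ : ℤ} (hm : Marker k a₀ x m) (hms : m < s) (ht : t₀ ≤ m + 1)
    (n : ℕ) : siteOut out k a₀ x t₀ ((m + 1 - t₀).toNat + n) s =
      siteOut out k a₀ x (m + 1) n s := by
  obtain ⟨N, hN⟩ := Int.eq_ofNat_of_zero_le (sub_nonneg.2 ht)
  obtain rfl : t₀ = m + 1 - N := by omega
  have h0 : (run out k a₀ x (m + 1 - N) N).1 = 0 := by
    cases N with
    | zero => rfl
    | succ N =>
      rw [run]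
      refine machineStep_of_mk ?_ _ _
      convert hm using 1
      push_cast
      ring
  rw [hN, Int.toNat_natCast, siteOut_add h0 n (by omega), sub_add_cancel]

theorem Produces.of_marker {m t₀ : ℤ} (hm : Marker k a₀ x m) (hms : m < s) (ht : t₀ ≤ m + 1)
    {n : ℕ} (hn : siteOut out k a₀ x t₀ n s = some b) : Produces out k a₀ x s b := by
  refine ⟨m, fun t₁ ht₁ => ⟨(m + 1 - t₁).toNat + n, ?_⟩⟩
  rw [siteOut_of_marker hm hms (by omega), ← siteOut_of_marker hm hms ht]
  exact siteOut_mono (by omega) hn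

theorem determinesAt_factorMap [Nonempty B] {m : ℤ} (hm : Marker k a₀ x m) (hm0 : m < 0) {n : ℕ}
    (hn : siteOut out k a₀ x (m + 1) n 0 ≠ none) {c d : ℕ} (hc : k - m - 1 ≤ c)
    (hd : m + n ≤ d) : DeterminesAt Set.univ (factorMap out k a₀) c d x := by
  intro y _ hy
  obtain ⟨b, hb⟩ := Option.ne_none_iff_exists'.1 hn
  have hmy : Marker k a₀ y m :=
    (Marker.congr fun i hi hi' => hy i (by omega) (by omega)).2 hm
  have hby : siteOut out k a₀ y (m + 1) n 0 = some b := by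
    rw [← hb]
    exact siteOut_congr (fun i hi hi' => hy i (by omega) (by omega)) 0
  rw [(Produces.of_marker hmy hm0 le_rfl hby).factorMap_eq,
    (Produces.of_marker hm hm0 le_rfl hb).factorMap_eq]

theorem exists_not_le_tsum_ind {P : ℕ → Prop} (h : ∑' n, ENNReal.ofReal (ind (P n)) ≠ ⊤) :
    ∃ n : ℕ, ¬P n ∧ (∀ i < n, P i) ∧ (n : ℝ≥0∞) ≤ ∑' n, ENNReal.ofReal (ind (P n)) := by
  classical
  have h1 : ∃ n, ¬P n := by
    by_contra! hP
    refine h ?_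
    simp only [ind_of (hP _), ENNReal.ofReal_one]
    exact ENNReal.tsum_const_eq_top_of_ne_zero one_ne_zero
  have h2 : ∀ i < Nat.find h1, P i := fun i hi => not_not.1 (Nat.find_min h1 hi)
  refine ⟨Nat.find h1, Nat.find_spec h1, h2, ?_⟩
  refine le_trans (le_of_eq ?_) (ENNReal.sum_le_tsum (Finset.range (Nat.find h1)))
  rw [Finset.sum_congr rfl fun i hi => by rw [ind_of (h2 i (Finset.mem_range.1 hi))]]
  simp

/-- The code length is bounded by the time elapsed since the last marker and the time needed to
finish all tasks, started from any of the last `L` sites. -/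
theorem codeLength_factorMap_le [Nonempty B] (hk : k ≠ 0) (x : ℤ → A) :
    codeLength Set.univ (factorMap out k a₀) x ≤
      k * ∑' j, ENNReal.ofReal (ind (NoMarker k a₀ x 0 j)) +
      ∑ c ∈ Finset.range L, ∑' n, ENNReal.ofReal (ind (Busy out k a₀ (2 * L) x (-c : ℤ) n)) := by
  by_cases hR : ∑' j, ENNReal.ofReal (ind (NoMarker k a₀ x 0 j)) = ⊤
  · rw [hR, ENNReal.mul_top (by simpa using hk), top_add]
    exact le_top
  obtain ⟨J, hJ, hJlt, hJle⟩ := exists_not_le_tsum_ind hR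
  obtain ⟨j, rfl⟩ : ∃ j, J = j + 1 := Nat.exists_eq_succ_of_ne_zero <| by
    rintro rfl
    exact hJ fun i hi => absurd hi i.not_lt_zero
  have hM : Marker k a₀ x (0 - 1 - (j * k : ℕ)) := by
    by_contra hM
    exact hJ (noMarker_succ.2 ⟨hJlt j j.lt_succ_self, hM⟩)
  set m : ℤ := 0 - 1 - (j * k : ℕ) with hm
  obtain ⟨n₀, hn₀⟩ : ∃ n₀ : ℕ, (n₀ : ℤ) = -(m + 1) := ⟨j * k, by omega⟩
  obtain ⟨n₁, hn₁, hrun⟩ := run_fst_sub (out := out) (k := k) (a₀ := a₀) x (m + 1) n₀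
  have hcL := run_fst_lt (out := out) (k := k) (a₀ := a₀) (NeZero.pos L) x (m + 1) n₀
  set c := (run out k a₀ x (m + 1) n₀).1
  have hS : ∑' n, ENNReal.ofReal (ind (Busy out k a₀ (2 * L) x (-c : ℤ) n)) ≤
      ∑ c ∈ Finset.range L, ∑' n, ENNReal.ofReal (ind (Busy out k a₀ (2 * L) x (-c : ℤ) n)) :=
    Finset.single_le_sum (f := fun c : ℕ =>
      ∑' n, ENNReal.ofReal (ind (Busy out k a₀ (2 * L) x (-c : ℤ) n)))
      (fun _ _ => zero_le) (Finset.mem_range.2 hcL)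
  by_cases hT : ∑' n, ENNReal.ofReal (ind (Busy out k a₀ (2 * L) x (-c : ℤ) n)) = ⊤
  · rw [hT, top_le_iff] at hS
    rw [hS, add_top]
    exact le_top
  obtain ⟨n, hn, -, hnle⟩ := exists_not_le_tsum_ind hT
  simp only [Busy, not_forall, not_not] at hn
  obtain ⟨n', hn', hn'L, hres⟩ := hn
  have hsite : siteOut out k a₀ x (m + 1) (n₁ + n') 0 ≠ none := by
    rw [siteOut_add hrun n' (by omega), show m + 1 + n₁ = -(c : ℤ) by omega]
    exact siteOut_ne_none hres (by omega) (by omega)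
  have hdet : DeterminesAt Set.univ (factorMap out k a₀) (k * (j + 1)) n x :=
    determinesAt_factorMap hM (by omega) hsite (by push_cast at hm ⊢; linarith)
      (by push_cast; omega)
  refine (iInf_le_of_le (k * (j + 1)) (iInf_le_of_le n (iInf_le_of_le hdet le_rfl))).trans ?_
  refine add_le_add ?_ (hnle.trans hS)
  rw [Nat.cast_mul]
  gcongr

end FactorMap

section FactorMap

variable {A B : Type*} {L : ℕ} [NeZero L] {out : List A → Option (Fin L → B)} {k : ℕ} {a₀ : A}

theorem FinDep.siteOut (t₀ : ℤ) (n : ℕ) (s : ℤ) :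
    FinDep fun x => siteOut out k a₀ x t₀ n s :=
  ⟨Finset.Icc (t₀ - k) (t₀ + n), fun x y h =>
    siteOut_congr (fun i hi hi' => h i (by simp only [Finset.coe_Icc, Set.mem_Icc]; omega)) s⟩

theorem abs_configWeight_sub_ind_le [Fintype A] [Fintype B] [DecidableEq B] [Nonempty B]
    {p : A → ℝ} {q : B → ℝ} {law : List A → (Fin L → B) → ℝ} {pot : List A → ℝ}
    (hsim : IsSimulator p law pot out) (hq : IsProbVector q)
    {F : Finset ℤ} {z : ℤ → B} {s₀ t₀ : ℤ} {j M : ℕ} (hF : ∀ s ∈ F, s₀ ≤ s)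
    (ht₀ : t₀ ≤ s₀ - (j * k : ℕ)) (hM : ∀ s ∈ F, s + L ≤ t₀ + M) (x : ℤ → A) (n : ℕ) :
    |configWeight law q F z (t₀ + n) (run out k a₀ x t₀ n) -
      ind (∀ s ∈ F, factorMap out k a₀ x s = z s)| ≤
      ind (NoMarker k a₀ x s₀ j) + ind (Busy out k a₀ M x t₀ n) := by
  have h0 := ind_nonneg (NoMarker k a₀ x s₀ j)
  have h1 := ind_nonneg (Busy out k a₀ M x t₀ n)
  by_cases hbad : NoMarker k a₀ x s₀ j ∨ Busy out k a₀ M x t₀ n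
  · have h2 := configWeight_nonneg (F := F) (z := z) hsim.law_nonneg (fun b => (hq.1 b).le)
      (t₀ + n) (run out k a₀ x t₀ n)
    have h3 := configWeight_le_one (F := F) (z := z) hsim.law_nonneg hsim.law_sum hq
      (t₀ + n) (run out k a₀ x t₀ n)
    have h4 := ind_nonneg (∀ s ∈ F, factorMap out k a₀ x s = z s)
    have h5 := ind_le_one (∀ s ∈ F, factorMap out k a₀ x s = z s)
    have h6 : 1 ≤ ind (NoMarker k a₀ x s₀ j) + ind (Busy out k a₀ M x t₀ n) := by
      rcases hbad with h | h
      · rw [ind_of h]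
        linarith
      · rw [ind_of h]
        linarith
    exact (abs_le.2 ⟨by linarith, by linarith⟩).trans h6
  · push Not at hbad
    obtain ⟨hmark, hbusy⟩ := hbad
    simp only [NoMarker, not_forall, not_not] at hmark
    simp only [Busy, not_forall, not_not] at hbusy
    obtain ⟨i, hij, hm⟩ := hmark
    obtain ⟨n', hn', hMn', hres⟩ := hbusy
    have hik : i * k ≤ j * k := Nat.mul_le_mul_right k hij.le
    have hsite : ∀ s ∈ F, siteOut out k a₀ x t₀ n s = some (factorMap out k a₀ x s) := by
      intro s hs
      have hs₀ := hF s hs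
      have hsM := hM s hs
      obtain ⟨b, hb⟩ := Option.ne_none_iff_exists'.1
        (siteOut_ne_none (s := s) hres (by omega) (by omega))
      have hb' := siteOut_mono hn' hb
      rw [hb', (Produces.of_marker hm (by omega) (by omega) hb').factorMap_eq]
    rw [configWeight_run_of_siteOut hsim.law_sum hsim.law_done
      (fun s hs => by have := hF s hs; omega) hsite, sub_self, abs_zero]
    positivity

variable [MeasurableSpace A] {μ : Measure (ℤ → A)}

theorem summable_busy {L : ℕ} {out : List A → Option (Fin L → B)}
    (hbusy : ∀ M, ∃ K : ℝ, ∀ (t₀ : ℤ) (N : ℕ),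
      ∑ n ∈ Finset.range N, ∫ x, ind (Busy out k a₀ M x t₀ n) ∂μ ≤ K) (M : ℕ) (t₀ : ℤ) :
    Summable fun n => ∫ x, ind (Busy out k a₀ M x t₀ n) ∂μ := by
  obtain ⟨K, hK⟩ := hbusy M
  exact summable_of_sum_range_le (fun n => integral_nonneg fun x => ind_nonneg _) (hK t₀)

variable [Fintype A] [DiscreteMeasurableSpace A] {p : A → ℝ}

theorem measurable_produces (s : ℤ) (b : B) : Measurable fun x => Produces out k a₀ x s b :=
  Measurable.exists fun _ => Measurable.forall fun _ => Measurable.forall fun _ =>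
    Measurable.exists fun n => ((FinDep.siteOut _ n s).comp fun r => r = some b).measurable

theorem measurable_factorMap [Fintype B] [MeasurableSpace B] [DiscreteMeasurableSpace B]
    [Nonempty B] : Measurable (factorMap out k a₀) := by
  refine measurable_pi_iff.2 fun s => measurable_to_countable' fun b => ?_
  have h : (fun x => factorMap out k a₀ x s) ⁻¹' {b} = {x | Produces out k a₀ x s b ∨
      (∀ b', ¬Produces out k a₀ x s b') ∧ Classical.arbitrary B = b} := by
    ext x
    simp only [Set.mem_preimage, Set.mem_singleton_iff, Set.mem_ofPred_eq]
    by_cases hx : ∃ b', Produces out k a₀ x s b'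
    · obtain ⟨b', hb'⟩ := hx
      rw [hb'.factorMap_eq]
      constructor
      · rintro rfl
        exact Or.inl hb'
      · rintro (h | h)
        · exact hb'.unique h
        · exact absurd hb' (h.1 b')
    · rw [factorMap, dif_neg hx]
      push Not at hx
      simp [hx]
  rw [h]
  exact measurableSet_setOfPred.2 ((measurable_produces s b).or
    ((Measurable.forall fun b' => (measurable_produces s b').not).and measurable_const))

theorem lintegral_ofReal_ind [IsProbabilityMeasure μ] {P : (ℤ → A) → Prop} (hP : FinDep P) :
    ∫⁻ x, ENNReal.ofReal (ind (P x)) ∂μ = ENNReal.ofReal (∫ x, ind (P x) ∂μ) :=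
  (ofReal_integral_eq_lintegral_ofReal ((hP.comp ind).integrable μ)
    (.of_forall fun _ => ind_nonneg _)).symm

theorem lintegral_tsum_ind_lt_top [IsProbabilityMeasure μ] {P : ℕ → (ℤ → A) → Prop}
    (hP : ∀ n, FinDep (P n)) (h : Summable fun n => ∫ x, ind (P n x) ∂μ) :
    ∫⁻ x, ∑' n, ENNReal.ofReal (ind (P n x)) ∂μ < ⊤ := by
  rw [lintegral_tsum fun n => ((hP n).comp fun Q => ENNReal.ofReal (ind Q)).measurable.aemeasurable]
  simp only [lintegral_ofReal_ind (hP _)]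
  exact h.tsum_ofReal_lt_top

/-- The code length of the factor map is dominated by an integrable function. -/
theorem exists_codeLength_factorMap_le [Nonempty B] (hp : IsProbVector p)
    (hμ : IsBernoulliMeasure μ p) (hk : k ≠ 0)
    (hbusy : ∀ M t₀, Summable fun n => ∫ x, ind (Busy out k a₀ M x t₀ n) ∂μ) :
    ∃ g : (ℤ → A) → ℝ≥0∞, Measurable g ∧ ∫⁻ x, g x ∂μ < ⊤ ∧
      ∀ x, codeLength Set.univ (factorMap out k a₀) x ≤ g x := by
  have : Nonempty A := ⟨a₀⟩
  have := hμ.isProbabilityMeasure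
  have hm {P : ℕ → (ℤ → A) → Prop} (hP : ∀ n, FinDep (P n)) :
      Measurable fun x => ∑' n, ENNReal.ofReal (ind (P n x)) :=
    Measurable.tsum fun n => ((hP n).comp fun Q => ENNReal.ofReal (ind Q)).measurable
  have hm1 : Measurable fun x => ∑' j, ENNReal.ofReal (ind (NoMarker k a₀ x 0 j)) :=
    hm fun j => FinDep.noMarker 0 j
  have hm2 (c : ℕ) : Measurable fun x =>
      ∑' n, ENNReal.ofReal (ind (Busy out k a₀ (2 * L) x (-c : ℤ) n)) :=
    hm fun n => FinDep.busy _ n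
  refine ⟨_, (hm1.const_mul _).add (Finset.measurable_fun_sum _ fun c _ => hm2 c), ?_,
    codeLength_factorMap_le hk⟩
  simp only [Pi.add_apply]
  rw [lintegral_add_left (hm1.const_mul _), lintegral_const_mul _ hm1,
    lintegral_finsetSum _ fun c _ => hm2 c]
  refine ENNReal.add_lt_top.2 ⟨ENNReal.mul_lt_top (ENNReal.natCast_lt_top k) ?_,
    ENNReal.sum_lt_top.2 fun c _ => lintegral_tsum_ind_lt_top (fun n => FinDep.busy _ n)
      (hbusy _ _)⟩
  refine lintegral_tsum_ind_lt_top (fun j => FinDep.noMarker 0 j) ?_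
  simp only [hμ.integral_noMarker hp]
  have h1 : p a₀ ≤ 1 := hp.2 ▸ Finset.single_le_sum (fun a _ => (hp.1 a).le) (Finset.mem_univ a₀)
  exact summable_geometric_of_lt_one (sub_nonneg.2 (pow_le_one₀ (hp.1 _).le h1))
    (sub_lt_self _ (pow_pos (hp.1 _) k))

variable [Fintype B] [DecidableEq B] [Nonempty B] {law : List A → (Fin L → B) → ℝ}
  {pot : List A → ℝ} {q : B → ℝ}

theorem isBernoulliMeasure_map_factorMap [MeasurableSpace B] [DiscreteMeasurableSpace B]
    (hp : IsProbVector p) (hμ : IsBernoulliMeasure μ p) (hq : IsProbVector q)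
    (hsim : IsSimulator p law pot out) (hlaw : law [] = fun y => ∏ i, q (y i))
    (hbusy : ∀ M t₀, Summable fun n => ∫ x, ind (Busy out k a₀ M x t₀ n) ∂μ) :
    IsBernoulliMeasure (μ.map (factorMap out k a₀)) q := by
  intro F z
  have : Nonempty A := ⟨a₀⟩
  have := hμ.isProbabilityMeasure
  have hcyl : MeasurableSet {y : ℤ → B | ∀ i ∈ F, y i = z i} :=
    FinDep.measurableSet ⟨F, fun x y h => by
      simp only [eq_iff_iff]
      exact forall₂_congr fun i hi => by rw [h i hi]⟩
  have hset : MeasurableSet {x | ∀ i ∈ F, factorMap out k a₀ x i = z i} :=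
    measurable_factorMap hcyl
  rw [Measure.map_apply measurable_factorMap hcyl, Set.preimage_ofPred_eq,
    ← ENNReal.ofReal_toReal (measure_ne_top μ _)]
  congr 1
  have hind : (fun x => ind (∀ i ∈ F, factorMap out k a₀ x i = z i)) =
      {x | ∀ i ∈ F, factorMap out k a₀ x i = z i}.indicator (1 : (ℤ → A) → ℝ) := by
    funext x
    by_cases hx : ∀ i ∈ F, factorMap out k a₀ x i = z i
    · rw [ind_of hx, Set.indicator_of_mem (by exact hx), Pi.one_apply]
    · rw [ind_of_not hx, Set.indicator_of_notMem (by exact hx)]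
  have hint : (μ {x | ∀ i ∈ F, factorMap out k a₀ x i = z i}).toReal =
      ∫ x, ind (∀ i ∈ F, factorMap out k a₀ x i = z i) ∂μ := by
    rw [hind, integral_indicator_one hset, measureReal_def]
  rw [hint]
  have hindint : Integrable (fun x => ind (∀ i ∈ F, factorMap out k a₀ x i = z i)) μ := by
    rw [hind]
    exact (integrable_const 1).indicator hset
  obtain ⟨s₀, hs₀⟩ : ∃ s₀ : ℤ, ∀ s ∈ F, s₀ ≤ s := F.bddBelow
  obtain ⟨s₁, hs₁⟩ : ∃ s₁ : ℤ, ∀ s ∈ F, s ≤ s₁ := F.bddAbove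
  have key (j : ℕ) : |∏ s ∈ F, q (z s) -
      ∫ x, ind (∀ i ∈ F, factorMap out k a₀ x i = z i) ∂μ| ≤ (1 - p a₀ ^ k) ^ j := by
    set t₀ := s₀ - (j * k : ℕ) with ht₀
    set M := (s₁ + L - t₀).toNat with hM
    have hlim : Tendsto (fun n => (1 - p a₀ ^ k) ^ j + ∫ x, ind (Busy out k a₀ M x t₀ n) ∂μ) atTop
        (nhds ((1 - p a₀ ^ k) ^ j + 0)) := (hbusy M t₀).tendsto_atTop_zero.const_add _
    rw [add_zero] at hlim
    refine ge_of_tendsto hlim (.of_forall fun n => ?_)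
    have hW : Integrable (fun x => configWeight law q F z (t₀ + n) (run out k a₀ x t₀ n)) μ :=
      ((FinDep.run t₀ n).comp fun σ => configWeight law q F z (t₀ + n) σ).integrable μ
    rw [← integral_configWeight_run (t₀ := t₀) hp hμ hq.2 hlaw hsim.law_step k a₀
      (fun s hs => by have := hs₀ s hs; omega) n, ← hμ.integral_noMarker hp s₀ j,
      ← integral_sub hW hindint, ← integral_add (((FinDep.noMarker s₀ j).comp ind).integrable μ)
      (((FinDep.busy t₀ n).comp ind).integrable μ)]
    refine (abs_integral_le_integral_abs).trans (integral_mono (hW.sub hindint).abs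
      ((((FinDep.noMarker s₀ j).comp ind).integrable μ).add
        (((FinDep.busy t₀ n).comp ind).integrable μ)) fun x => ?_)
    exact abs_configWeight_sub_ind_le hsim hq hs₀ le_rfl
      (fun s hs => by have := hs₁ s hs; omega) x n
  have h1 : p a₀ ≤ 1 := hp.2 ▸ Finset.single_le_sum (fun a _ => (hp.1 a).le) (Finset.mem_univ a₀)
  have hlim := tendsto_pow_atTop_nhds_zero_of_lt_one
    (sub_nonneg.2 (pow_le_one₀ (n := k) (hp.1 a₀).le h1)) (sub_lt_self 1 (pow_pos (hp.1 a₀) k))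
  have := ge_of_tendsto hlim (.of_forall key)
  exact (sub_eq_zero.1 (abs_eq_zero.1 (le_antisymm this (abs_nonneg _)))).symm

end FactorMap

theorem IsProbVector.lt_one_of_vecEntropy_pos {A : Type*} [Fintype A] {p : A → ℝ}
    (hp : IsProbVector p) (h : 0 < vecEntropy p) (a : A) : p a < 1 := by
  classical
  by_contra! ha
  refine h.not_ge ?_
  rw [vecEntropy, neg_nonpos]
  refine Finset.sum_nonneg fun b _ => mul_nonneg (hp.1 b).le (Real.log_nonneg ?_)
  by_contra! hb
  have hab : a ≠ b := by
    rintro rfl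
    linarith
  have := Finset.sum_le_sum_of_subset_of_nonneg (f := p) (Finset.subset_univ {a, b})
    fun i _ _ => (hp.1 i).le
  rw [Finset.sum_pair hab, hp.2] at this
  linarith [hp.1 b]

theorem IsProbVector.vecEntropy_nonneg {A : Type*} [Fintype A] {p : A → ℝ}
    (hp : IsProbVector p) : 0 ≤ vecEntropy p := by
  rw [vecEntropy, Left.nonneg_neg_iff]
  refine Finset.sum_nonpos fun a _ => mul_nonpos_of_nonneg_of_nonpos (hp.1 a).le
    (Real.log_nonpos (hp.1 a).le ?_)
  exact hp.2 ▸ Finset.single_le_sum (fun a _ => (hp.1 a).le) (Finset.mem_univ a)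

theorem IsProbVector.nonempty {A : Type*} [Fintype A] {p : A → ℝ} (hp : IsProbVector p) :
    Nonempty A := by
  by_contra h
  have := not_nonempty_iff.1 h
  simpa using hp.2

/-- **Serafin.** If `p` and `q` are strictly positive probability vectors on finite
alphabets with `H(p) > H(q)`, then there exists a finitary homomorphism from `BS(p)` to
`BS(q)` whose code length has finite expectation. -/
theorem finitary_factor_finite_expected_code_length_of_entropy_gt
    {A B : Type*} [Fintype A] [Fintype B]
    [MeasurableSpace A] [DiscreteMeasurableSpace A]
    [MeasurableSpace B] [DiscreteMeasurableSpace B]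
    (p : A → ℝ) (q : B → ℝ) (hp : IsProbVector p) (hq : IsProbVector q)
    (μ : Measure (ℤ → A)) (ν : Measure (ℤ → B))
    (hμ : IsBernoulliMeasure μ p) (hν : IsBernoulliMeasure ν q)
    (hH : vecEntropy q < vecEntropy p) :
    ∃ (D : Set (ℤ → A)) (φ : (ℤ → A) → (ℤ → B)),
      IsFactorMap μ ν D φ ∧ IsFinitary μ D φ ∧
      (∫⁻ x, codeLength D φ x ∂μ) < ⊤ := by
  classical
  have := hp.nonempty
  have := hq.nonempty
  have := hμ.isProbabilityMeasure
  obtain ⟨a₀, ha₀⟩ := Finite.exists_max p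
  have hlt : p a₀ < 1 := hp.lt_one_of_vecEntropy_pos (hq.vecEntropy_nonneg.trans_lt hH) a₀
  obtain ⟨L, hL, c, hcL, law, pot, out, hsim, hlaw, hpotc⟩ :=
    exists_simulableWithin_lt hp hq hH ha₀ hlt
  have : NeZero L := ⟨hL.ne'⟩
  have hLpos : (0 : ℝ) < L := Nat.cast_pos.2 hL
  set β := pot [] / L with hβ
  have hβ0 : 0 ≤ β := div_nonneg (hsim.pot_nonneg []) hLpos.le
  have hβ1 : β < 1 := (div_lt_one hLpos).2 (hpotc.trans_lt hcL)
  have hβL : pot [] ≤ β * L := (div_mul_cancel₀ _ hLpos.ne').ge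
  have hlim : Tendsto (fun k => pot [] * p a₀ ^ k) atTop (nhds (pot [] * 0)) :=
    (tendsto_pow_atTop_nhds_zero_of_lt_one (hp.1 a₀).le hlt).const_mul _
  rw [mul_zero] at hlim
  obtain ⟨k, hk, hk1⟩ := ((hlim.eventually (ge_mem_nhds (half_pos (sub_pos.2 hβ1)))).and
    (eventually_ge_atTop 1)).exists
  have hbusy := summable_busy (out := out) (exists_sum_integral_busy_le (M := ·) hp hμ
    hsim.pot_nonneg hsim.pot_step hβ0 hβL hβ1 hk)
  obtain ⟨g, hgm, hg, hle⟩ := exists_codeLength_factorMap_le hp hμ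
    (Nat.one_le_iff_ne_zero.1 hk1) hbusy
  refine ⟨Set.univ, factorMap out k a₀, ⟨measurable_factorMap, MeasurableSet.univ, rfl,
    measure_univ, ?_, fun x _ => factorMap_shift x⟩, ?_, (lintegral_mono hle).trans_lt hg⟩
  · exact hν.unique (isBernoulliMeasure_map_factorMap hp hμ hq hsim hlaw hbusy)
  · filter_upwards [ae_lt_top hgm hg.ne] with x hx _
    by_contra! h
    refine ((hle x).trans_lt hx).ne ?_
    simp [codeLength, h]
end
end

section
/- Let P and Q be irreducible aperiodic stochastic matrices on finite state sets. If the mixing Markov shifts determined by P and Q are finitarily isomorphic with finite expected code times, then Δ_P = Δ_Q. -/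
open MeasureTheory ENNReal Filter

noncomputable section

/-- A stochastic matrix: nonnegative entries, rows summing to one. -/
def IsStochastic {S : Type*} [Fintype S] (P : Matrix S S ℝ) : Prop :=
  (∀ i j, 0 ≤ P i j) ∧ ∀ i, ∑ j, P i j = 1

/-- Irreducible and aperiodic (primitive): some power has all entries strictly positive. -/
def IsPrimitive {S : Type*} [Fintype S] [DecidableEq S] (P : Matrix S S ℝ) : Prop :=
  ∃ n : ℕ, ∀ i j, 0 < (P ^ n) i j

/-- Irreducible: every state leads to every state in some positive number of steps. -/
def IsIrreducibleMat {S : Type*} [Fintype S] [DecidableEq S] (P : Matrix S S ℝ) : Prop :=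
  ∀ i j, ∃ n : ℕ, 0 < n ∧ 0 < (P ^ n) i j

/-- A stationary probability vector for `P`. -/
def IsStationaryVector {S : Type*} [Fintype S] (P : Matrix S S ℝ) (ppi : S → ℝ) : Prop :=
  (∀ i, 0 ≤ ppi i) ∧ (∑ i, ppi i = 1) ∧ ∀ j, ∑ i, ppi i * P i j = ppi j

/-- `μ` is the (stationary) Markov measure on `(ℤ → S)` determined by the stochastic
matrix `P` with stationary vector `ppi`. -/
def IsMarkovMeasure {S : Type*} [Fintype S] [MeasurableSpace S]
    (μ : Measure (ℤ → S)) (P : Matrix S S ℝ) (ppi : S → ℝ) : Prop :=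
  ∀ (m n : ℤ), m ≤ n → ∀ w : ℤ → S,
    μ {x | ∀ i : ℤ, m ≤ i → i ≤ n → x i = w i} =
      ENNReal.ofReal (ppi (w m) * ∏ i ∈ Finset.Ico m n, P (w i) (w (i + 1)))

/-- The entropy `h(P) = -∑_{i,j} π_i P(i,j) log P(i,j)` of the Markov shift of `P`. -/
def markovEntropy {S : Type*} [Fintype S] (P : Matrix S S ℝ) (ppi : S → ℝ) : ℝ :=
  -∑ i, ∑ j, ppi i * P i j * Real.log (P i j)

/-- The weight `P(c_0,c_1) ⋯ P(c_{n-1},c_n)` of the path `c_0, …, c_n` in `P`. -/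
def cycleWeight {S : Type*} (P : Matrix S S ℝ) (n : ℕ) (c : ℕ → S) : ℝ :=
  ∏ i ∈ Finset.range n, P (c i) (c (i + 1))

/-- `c` describes a cycle of length `n`: it returns to its starting state. -/
def IsCycle {S : Type*} (n : ℕ) (c : ℕ → S) : Prop := c n = c 0

/-- Krieger's Δ-group: the multiplicative subgroup of the positive reals (inside `ℝˣ`)
generated by ratios of strictly positive weights of two cycles of the same length through
the same state. -/
def DeltaGroup {S : Type*} (P : Matrix S S ℝ) : Subgroup ℝˣ :=
  Subgroup.closure {u : ℝˣ | ∃ (n : ℕ) (c d : ℕ → S), 0 < n ∧ IsCycle n c ∧ IsCycle n d ∧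
    c 0 = d 0 ∧ 0 < cycleWeight P n c ∧ 0 < cycleWeight P n d ∧
    (u : ℝ) = cycleWeight P n c / cycleWeight P n d}

/-- The Γ-group of Parry–Schmidt: the multiplicative subgroup of the positive reals (inside
`ℝˣ`) generated by all strictly positive cycle weights. -/
def GammaGroup {S : Type*} (P : Matrix S S ℝ) : Subgroup ℝˣ :=
  Subgroup.closure {u : ℝˣ | ∃ (n : ℕ) (c : ℕ → S), 0 < n ∧ IsCycle n c ∧
    0 < cycleWeight P n c ∧ (u : ℝ) = cycleWeight P n c}

/-- The matrix `P^{(t)}` with entries `P(i,j)^t` where `P(i,j) > 0`, and `0` elsewhere,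
viewed as a complex matrix. -/
def betaMatrix {S : Type*} (P : Matrix S S ℝ) (t : ℝ) : Matrix S S ℂ :=
  Matrix.of fun i j => if 0 < P i j then ((P i j ^ t : ℝ) : ℂ) else 0

/-- Tuncel's β-function: `β_P(t)` is the spectral radius of `P^{(t)}`. -/
def betaFunction {S : Type*} [Fintype S] [DecidableEq S] (P : Matrix S S ℝ) (t : ℝ) : ℝ≥0∞ :=
  spectralRadius ℂ (betaMatrix P t)

/-- Two shift systems are finitarily isomorphic with finite expected code times (fect):
there is a finitary isomorphism such that the code lengths of the map and of its inverse
both have finite expectation. -/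
def FinitarilyIsomorphicFect {A B : Type*} [MeasurableSpace A] [MeasurableSpace B]
    (μ : Measure (ℤ → A)) (ν : Measure (ℤ → B)) : Prop :=
  ∃ (D : Set (ℤ → A)) (E : Set (ℤ → B)) (φ : (ℤ → A) → (ℤ → B)) (ψ : (ℤ → B) → (ℤ → A)),
    IsFinitaryIsomorphism μ ν D E φ ψ ∧
    (∫⁻ x, codeLength D φ x ∂μ) < ⊤ ∧ (∫⁻ y, codeLength E ψ y ∂ν) < ⊤

section Cylinders

variable {S : Type*}

/-- The points agreeing with `w` on the window `[a, b]`. -/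
def cyl (a b : ℤ) (w : ℤ → S) : Set (ℤ → S) := {x | ∀ i : ℤ, a ≤ i → i ≤ b → x i = w i}

/-- Replace the coordinates of `x` in the window `[a, b]` by those of `v`. -/
def splice (a b : ℤ) (v x : ℤ → S) : ℤ → S := fun i => if a ≤ i ∧ i ≤ b then v i else x i

/-- Translation by `n` steps: the `n`-th power of the shift. -/
def shiftBy (n : ℤ) (x : ℤ → S) : ℤ → S := fun i => x (i + n)

lemma shiftBy_zero (x : ℤ → S) : shiftBy 0 x = x := by
  funext i
  simp [shiftBy]

lemma shiftBy_shiftBy (m n : ℤ) (x : ℤ → S) : shiftBy m (shiftBy n x) = shiftBy (m + n) x := by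
  funext i
  simp [shiftBy, add_assoc]

/-- The weight of the path that `w` follows on the window `[a, b]`. -/
def pathWeight (P : Matrix S S ℝ) (a b : ℤ) (w : ℤ → S) : ℝ :=
  ∏ i ∈ Finset.Ico a b, P (w i) (w (i + 1))

lemma splice_mem_cyl (a b : ℤ) (v x : ℤ → S) : splice a b v x ∈ cyl a b v :=
  fun _ h₁ h₂ => if_pos ⟨h₁, h₂⟩

lemma splice_splice_of_mem {a b : ℤ} {u v x : ℤ → S} (hx : x ∈ cyl a b u) :
    splice a b u (splice a b v x) = x := by
  funext i
  by_cases h : a ≤ i ∧ i ≤ b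
  · simp [splice, h, hx i h.1 h.2]
  · simp [splice, h]

lemma splice_of_le {a b : ℤ} {u v x : ℤ → S} (ha : u a = v a) (hx : x ∈ cyl a b v) (hab : a ≤ b)
    {i : ℤ} (hi : i ≤ a) : splice a b u x i = x i := by
  by_cases h : a ≤ i ∧ i ≤ b
  · obtain rfl : i = a := le_antisymm hi h.1
    rw [splice, if_pos h, ha, hx i le_rfl hab]
  · rw [splice, if_neg h]

lemma splice_of_ge {a b : ℤ} {u v x : ℤ → S} (hb : u b = v b) (hx : x ∈ cyl a b v) (hab : a ≤ b)
    {i : ℤ} (hi : b ≤ i) : splice a b u x i = x i := by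
  by_cases h : a ≤ i ∧ i ≤ b
  · obtain rfl : i = b := le_antisymm h.2 hi
    rw [splice, if_pos h, hb, hx i hab le_rfl]
  · rw [splice, if_neg h]

lemma pathWeight_congr {P : Matrix S S ℝ} {a b : ℤ} {w w' : ℤ → S}
    (h : ∀ i, a ≤ i → i ≤ b → w i = w' i) : pathWeight P a b w = pathWeight P a b w' :=
  Finset.prod_congr rfl fun i hi => by
    rw [Finset.mem_Ico] at hi
    rw [h i hi.1 hi.2.le, h (i + 1) (by lia) (by lia)]

lemma pathWeight_mul {P : Matrix S S ℝ} {a b c : ℤ} (hab : a ≤ b) (hbc : b ≤ c) (w : ℤ → S) :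
    pathWeight P a b w * pathWeight P b c w = pathWeight P a c w := by
  rw [pathWeight, pathWeight, pathWeight,
    ← Finset.prod_union (Finset.Ico_disjoint_Ico_consecutive a b c),
    Finset.Ico_union_Ico_eq_Ico hab hbc]

lemma pathWeight_nonneg {P : Matrix S S ℝ} (hP : ∀ i j, 0 ≤ P i j) (a b : ℤ) (w : ℤ → S) :
    0 ≤ pathWeight P a b w :=
  Finset.prod_nonneg fun _ _ => hP _ _

lemma pathWeight_add_natCast (P : Matrix S S ℝ) (a : ℤ) (n : ℕ) (w : ℤ → S) :
    pathWeight P a (a + n) w = cycleWeight P n fun i => w (a + i) := by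
  induction n with
  | zero => simp [pathWeight, cycleWeight]
  | succ n ih =>
    rw [← pathWeight_mul (b := a + n) (by lia) (by lia), ih, cycleWeight, cycleWeight,
      Finset.prod_range_succ]
    congr 1
    have h : Finset.Ico (a + n) (a + (n + 1 : ℕ)) = {a + (n : ℤ)} := by
      ext i; simp only [Finset.mem_Ico, Finset.mem_singleton]; push_cast; lia
    rw [pathWeight, h, Finset.prod_singleton]
    push_cast
    rw [add_assoc]

section Measurability

variable [MeasurableSpace S]

lemma measurable_splice (a b : ℤ) (v : ℤ → S) : Measurable (splice a b v) := by
  refine measurable_pi_lambda _ fun i => ?_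
  by_cases h : a ≤ i ∧ i ≤ b
  · simp only [splice, h, and_self, if_true, measurable_const]
  · simp only [splice, h, if_false, measurable_pi_apply]

lemma measurable_shiftBy (n : ℤ) : Measurable (shiftBy n : (ℤ → S) → ℤ → S) :=
  measurable_pi_lambda _ fun i => measurable_pi_apply (i + n)

/-- A set that depends only on the coordinates in a finite window is measurable. -/
lemma measurableSet_of_window [Finite S] [DiscreteMeasurableSpace S] {a b : ℤ} {A : Set (ℤ → S)}
    (h : ∀ x ∈ A, ∀ y, (∀ i, a ≤ i → i ≤ b → y i = x i) → y ∈ A) : MeasurableSet A := by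
  have hA : A = (Finset.Icc a b).restrict ⁻¹' ((Finset.Icc a b).restrict '' A) := by
    refine Set.Subset.antisymm (Set.subset_preimage_image _ _) ?_
    rintro y ⟨x, hx, hxy⟩
    refine h x hx y fun i h₁ h₂ => ?_
    exact (congrFun hxy ⟨i, Finset.mem_Icc.2 ⟨h₁, h₂⟩⟩).symm
  rw [hA]
  exact (Finset.measurable_restrict _) (Set.toFinite _).measurableSet

lemma measurableSet_cyl [Finite S] [DiscreteMeasurableSpace S] (a b : ℤ) (w : ℤ → S) :
    MeasurableSet (cyl a b w) :=
  measurableSet_of_window fun _ hx _ hy i h₁ h₂ => (hy i h₁ h₂).trans (hx i h₁ h₂)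

/-- Finite measures agreeing on all large symmetric cylinders are equal. -/
lemma measure_ext_of_cyl [Finite S] [DiscreteMeasurableSpace S] {μ₁ μ₂ : Measure (ℤ → S)}
    [IsFiniteMeasure μ₁] [IsFiniteMeasure μ₂] (N : ℕ)
    (h : ∀ n : ℕ, N ≤ n → ∀ w, μ₁ (cyl (-n) n w) = μ₂ (cyl (-n) n w)) : μ₁ = μ₂ := by
  have hmap : ∀ I : Finset ℤ, μ₁.map I.restrict = μ₂.map I.restrict := by
    intro I
    obtain ⟨n, hn, hI⟩ : ∃ n : ℕ, N ≤ n ∧ I ⊆ Finset.Icc (-(n : ℤ)) n := by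
      refine ⟨N + I.sup Int.natAbs, by lia, fun i hi => ?_⟩
      have := Finset.le_sup (f := Int.natAbs) hi
      rw [Finset.mem_Icc]; lia
    set J := Finset.Icc (-(n : ℤ)) n
    have hJ : μ₁.map J.restrict = μ₂.map J.restrict := by
      refine Measure.ext_of_singleton fun w => ?_
      rw [Measure.map_apply (Finset.measurable_restrict _) (measurableSet_singleton _),
        Measure.map_apply (Finset.measurable_restrict _) (measurableSet_singleton _)]
      have h0 : (0 : ℤ) ∈ J := Finset.mem_Icc.2 ⟨by lia, by lia⟩
      have hw : J.restrict ⁻¹' ({w} : Set (J → S)) =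
          cyl (-(n : ℤ)) n fun i => if hi : i ∈ J then w ⟨i, hi⟩ else w ⟨0, h0⟩ := by
        ext x
        simp only [Set.mem_preimage, Set.mem_singleton_iff, cyl, Set.mem_ofPred_eq]
        constructor
        · rintro rfl i h₁ h₂
          rw [dif_pos (Finset.mem_Icc.2 ⟨h₁, h₂⟩)]; rfl
        · intro hx
          funext ⟨i, hi⟩
          have hi' := Finset.mem_Icc.1 hi
          simpa [hi] using hx i hi'.1 hi'.2
      rw [hw, h n hn]
    rw [← Finset.restrict₂_comp_restrict hI,
      ← Measure.map_map (Finset.measurable_restrict₂ hI) (Finset.measurable_restrict _), hJ,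
      Measure.map_map (Finset.measurable_restrict₂ hI) (Finset.measurable_restrict _)]
  exact IsProjectiveLimit.unique (P := fun I => μ₂.map I.restrict) hmap fun _ => rfl

end Measurability

end Cylinders

section Markov

variable {S : Type*} [Fintype S] [MeasurableSpace S]
  {P : Matrix S S ℝ} {ppi : S → ℝ} {μ : Measure (ℤ → S)}

lemma IsMarkovMeasure.measure_cyl (hμ : IsMarkovMeasure μ P ppi) {a b : ℤ} (hab : a ≤ b)
    (w : ℤ → S) : μ (cyl a b w) = ENNReal.ofReal (ppi (w a) * pathWeight P a b w) :=
  hμ a b hab w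

lemma IsMarkovMeasure.isProbabilityMeasure [DiscreteMeasurableSpace S]
    (hμ : IsMarkovMeasure μ P ppi) (hppi : IsStationaryVector P ppi) :
    IsProbabilityMeasure μ := by
  constructor
  have huniv : (Set.univ : Set (ℤ → S)) = ⋃ s : S, cyl 0 0 fun _ => s := by
    refine (Set.eq_univ_of_forall fun x => Set.mem_iUnion.2 ⟨x 0, fun i h₁ h₂ => ?_⟩).symm
    rw [le_antisymm h₂ h₁]
  rw [huniv, measure_iUnion _ fun s => measurableSet_cyl _ _ _, tsum_fintype]
  · simp only [hμ.measure_cyl le_rfl, pathWeight, Finset.Ico_self, Finset.prod_empty, mul_one]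
    rw [← ENNReal.ofReal_sum_of_nonneg fun i _ => hppi.1 i, hppi.2.1, ENNReal.ofReal_one]
  · intro s t hst
    refine Set.disjoint_left.2 fun x hs ht => hst ?_
    exact (hs 0 le_rfl le_rfl).symm.trans (ht 0 le_rfl le_rfl)

lemma IsMarkovMeasure.measurePreserving_shiftBy [DiscreteMeasurableSpace S]
    (hμ : IsMarkovMeasure μ P ppi) (hppi : IsStationaryVector P ppi) (n : ℤ) :
    MeasurePreserving (shiftBy n) μ μ := by
  have := hμ.isProbabilityMeasure hppi
  have := Measure.isProbabilityMeasure_map (μ := μ) (measurable_shiftBy (S := S) n).aemeasurable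
  refine ⟨measurable_shiftBy n, measure_ext_of_cyl 0 fun k _ w => ?_⟩
  rw [Measure.map_apply (measurable_shiftBy n) (measurableSet_cyl _ _ _)]
  have hpre : shiftBy n ⁻¹' cyl (-(k : ℤ)) k w = cyl (-(k : ℤ) + n) (k + n) (shiftBy (-n) w) := by
    ext x
    refine ⟨fun hx i h₁ h₂ => ?_, fun hx i h₁ h₂ => ?_⟩
    · have := hx (i + -n) (by lia) (by lia)
      simpa [shiftBy] using this
    · have := hx (i + n) (by lia) (by lia)
      simpa [shiftBy] using this
  rw [hpre, hμ.measure_cyl (by lia), hμ.measure_cyl (by lia)]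
  congr 2
  · simp [shiftBy]
  · rw [pathWeight, pathWeight, ← Finset.image_add_right_Ico, Finset.prod_image (by simp)]
    refine Finset.prod_congr rfl fun i _ => ?_
    simp only [shiftBy]
    congr 2 <;> ring

/-- Exchanging two words with common endpoints multiplies the measure by the ratio of the path
weights. -/
lemma IsMarkovMeasure.pathWeight_mul_measure_cyl_inter [DiscreteMeasurableSpace S]
    (hμ : IsMarkovMeasure μ P ppi) (hppi : IsStationaryVector P ppi) (hP : ∀ i j, 0 ≤ P i j)
    {a b : ℤ} (hab : a ≤ b) {u v : ℤ → S} (ha : u a = v a) (hb : u b = v b)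
    {A : Set (ℤ → S)} (hA : MeasurableSet A) :
    ENNReal.ofReal (pathWeight P a b u) * μ (cyl a b v ∩ A) =
      ENNReal.ofReal (pathWeight P a b v) * μ (cyl a b u ∩ splice a b v ⁻¹' A) := by
  have := hμ.isProbabilityMeasure hppi
  have hmeas := measurable_splice a b v
  have key : (pathWeight P a b u).toNNReal • μ.restrict (cyl a b v) =
      (pathWeight P a b v).toNNReal • (μ.restrict (cyl a b u)).map (splice a b v) := by
    refine measure_ext_of_cyl (a.natAbs + b.natAbs) fun n hn w => ?_
    simp only [Measure.smul_apply]
    rw [Measure.map_apply hmeas (measurableSet_cyl _ _ _),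
      Measure.restrict_apply (measurableSet_cyl _ _ _),
      Measure.restrict_apply (hmeas (measurableSet_cyl _ _ _))]
    have hna : -(n : ℤ) ≤ a := by lia
    have hnb : b ≤ n := by lia
    by_cases hw : w ∈ cyl a b v
    · have h₁ : cyl (-(n : ℤ)) n w ∩ cyl a b v = cyl (-(n : ℤ)) n w :=
        Set.inter_eq_left.2 fun x hx i h₁ h₂ =>
          (hx i (by lia) (by lia)).trans (hw i h₁ h₂)
      have h₂ : splice a b v ⁻¹' cyl (-(n : ℤ)) n w ∩ cyl a b u =
          cyl (-(n : ℤ)) n (splice a b u w) := by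
        ext x
        constructor
        · rintro ⟨hx, hxu⟩ i h₁ h₂
          by_cases h : a ≤ i ∧ i ≤ b
          · rw [splice, if_pos h, hxu i h.1 h.2]
          · have := hx i h₁ h₂
            rw [splice, if_neg h] at this
            rw [splice, if_neg h, this]
        · intro hx
          refine ⟨fun i h₁ h₂ => ?_, fun i h₁ h₂ => ?_⟩
          · by_cases h : a ≤ i ∧ i ≤ b
            · rw [splice, if_pos h, hw i h.1 h.2]
            · rw [splice, if_neg h, hx i h₁ h₂, splice, if_neg h]
          · rw [hx i (by lia) (by lia), splice, if_pos ⟨h₁, h₂⟩]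
      rw [h₁, h₂, hμ.measure_cyl (by lia), hμ.measure_cyl (by lia),
        splice_of_le ha hw hab hna, ENNReal.smul_def, ENNReal.smul_def, smul_eq_mul, smul_eq_mul]
      change ENNReal.ofReal _ * _ = ENNReal.ofReal _ * _
      rw [← ENNReal.ofReal_mul (pathWeight_nonneg hP _ _ _),
        ← ENNReal.ofReal_mul (pathWeight_nonneg hP _ _ _)]
      congr 1
      have hle : ∀ x, pathWeight P (-(n : ℤ)) n x =
          pathWeight P (-(n : ℤ)) a x * pathWeight P a b x * pathWeight P b n x := fun x => by
        rw [pathWeight_mul hna hab, pathWeight_mul (by lia) hnb]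
      rw [hle w, hle (splice a b u w),
        pathWeight_congr (w := splice a b u w) (w' := w) (a := -(n : ℤ)) (b := a)
          (fun i _ hi => splice_of_le ha hw hab hi),
        pathWeight_congr (w := splice a b u w) (w' := w) (a := b) (b := n)
          (fun i hi _ => splice_of_ge hb hw hab hi),
        pathWeight_congr (w := splice a b u w) (w' := u) (splice_mem_cyl a b u w),
        pathWeight_congr (w := w) (w' := v) hw]
      ring
    · have h₁ : cyl (-(n : ℤ)) n w ∩ cyl a b v = ∅ := by
        refine Set.eq_empty_of_forall_notMem fun x hx => hw fun i h₁ h₂ => ?_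
        rw [← hx.1 i (by lia) (by lia), hx.2 i h₁ h₂]
      have h₂ : splice a b v ⁻¹' cyl (-(n : ℤ)) n w ∩ cyl a b u = ∅ := by
        refine Set.eq_empty_of_forall_notMem fun x hx => hw fun i h₁ h₂ => ?_
        rw [← hx.1 i (by lia) (by lia), splice_mem_cyl a b v x i h₁ h₂]
      rw [h₁, h₂, measure_empty, smul_zero, smul_zero]
  have := congrArg (fun m : Measure (ℤ → S) => m A) key
  simp only [Measure.smul_apply] at this
  rwa [Measure.map_apply hmeas hA, Measure.restrict_apply hA, Measure.restrict_apply (hmeas hA),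
    ENNReal.smul_def, ENNReal.smul_def, smul_eq_mul, smul_eq_mul, Set.inter_comm A,
    Set.inter_comm (splice a b v ⁻¹' A)] at this

end Markov

section Paths

variable {S : Type*} [Fintype S] [DecidableEq S] {P : Matrix S S ℝ}

lemma IsStationaryVector.pos {ppi : S → ℝ} (hppi : IsStationaryVector P ppi)
    (hprim : IsPrimitive P) (j : S) : 0 < ppi j := by
  obtain ⟨n, hn⟩ := hprim
  have hinv : ∀ k : ℕ, Matrix.vecMul ppi (P ^ k) = ppi := by
    intro k
    induction k with
    | zero => simp
    | succ k ih =>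
      rw [pow_succ, ← Matrix.vecMul_vecMul, ih]
      exact funext hppi.2.2
  obtain ⟨i, hi⟩ : ∃ i, 0 < ppi i := by
    by_contra! h
    have := Finset.sum_nonpos fun i (_ : i ∈ Finset.univ) => h i
    linarith [hppi.2.1]
  rw [← hinv n]
  exact Finset.sum_pos' (fun k _ => mul_nonneg (hppi.1 k) (hn k j).le)
    ⟨i, Finset.mem_univ i, mul_pos hi (hn i j)⟩

lemma exists_path_of_pow_pos (hP : ∀ i j, 0 ≤ P i j) (n : ℕ) (i j : S) (h : 0 < (P ^ n) i j) :
    ∃ c : ℕ → S, c 0 = i ∧ c n = j ∧ 0 < cycleWeight P n c := by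
  induction n generalizing j with
  | zero =>
    have hij : i = j := by
      by_contra hne
      simp [Matrix.one_apply_ne hne] at h
    exact ⟨fun _ => i, rfl, hij, by simp [cycleWeight]⟩
  | succ n ih =>
    rw [pow_succ, Matrix.mul_apply] at h
    obtain ⟨k, -, hk⟩ := Finset.exists_lt_of_sum_lt (s := Finset.univ) (f := fun _ : S => (0 : ℝ))
      (by simpa using h)
    have hkj : 0 < P k j := (hP k j).lt_of_ne fun h0 => by simp [← h0] at hk
    obtain ⟨c, h0, hn, hc⟩ := ih k (pos_of_mul_pos_left hk (hP k j))
    refine ⟨Function.update c (n + 1) j, ?_, by simp, ?_⟩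
    · rw [Function.update_of_ne (by lia), h0]
    · rw [cycleWeight, Finset.prod_range_succ]
      refine mul_pos (hc.trans_eq ?_) ?_
      · refine Finset.prod_congr rfl fun i hi => ?_
        rw [Finset.mem_range] at hi
        rw [Function.update_of_ne (by lia), Function.update_of_ne (by lia)]
      · rw [Function.update_of_ne (by lia), Function.update_self, hn]
        exact hkj

/-- The ratio of the weights of two paths with the same length and endpoints lies in `Δ_P`. -/
lemma mem_DeltaGroup_of_paths (hP : ∀ i j, 0 ≤ P i j) (hprim : IsPrimitive P) {n : ℕ} (hn : 0 < n)
    {c d : ℕ → S} (h0 : c 0 = d 0) (hend : c n = d n) (hc : 0 < cycleWeight P n c)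
    (hd : 0 < cycleWeight P n d) {r : ℝˣ}
    (hr : (r : ℝ) = cycleWeight P n c / cycleWeight P n d) : r ∈ DeltaGroup P := by
  obtain ⟨k, hk⟩ := hprim
  obtain ⟨t, ht0, htk, ht⟩ := exists_path_of_pow_pos hP k (c n) (c 0) (hk _ _)
  let close (e : ℕ → S) : ℕ → S := fun i => if i ≤ n then e i else t (i - n)
  have hweight : ∀ e : ℕ → S, e n = c n →
      cycleWeight P (n + k) (close e) = cycleWeight P n e * cycleWeight P k t := by
    intro e he
    rw [cycleWeight, Finset.prod_range_add]
    have hshift : ∀ i, close e (n + i) = t i := by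
      intro i
      rcases Nat.eq_zero_or_pos i with rfl | hi
      · simp [close, he, ht0]
      · simp only [close]
        rw [if_neg (by lia), Nat.add_sub_cancel_left]
    congr 1
    · refine Finset.prod_congr rfl fun i hi => ?_
      rw [Finset.mem_range] at hi
      simp only [close]
      rw [if_pos (by lia), if_pos (by lia)]
    · exact Finset.prod_congr rfl fun i _ => by rw [hshift, add_assoc, hshift]
  have hcycle : ∀ e : ℕ → S, e n = c n → e 0 = c 0 → IsCycle (n + k) (close e) := by
    intro e he he0
    rcases Nat.eq_zero_or_pos k with rfl | hk0
    · simp [IsCycle, close, he, he0, ← htk, ht0]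
    · simp only [IsCycle, close]
      rw [if_neg (by lia), if_pos (by lia), Nat.add_sub_cancel_left, htk, he0]
  refine Subgroup.subset_closure ⟨n + k, close c, close d, by lia, hcycle c rfl rfl,
    hcycle d hend.symm h0.symm, by simp [close, h0], ?_, ?_, ?_⟩
  · rw [hweight c rfl]; positivity
  · rw [hweight d hend.symm]; positivity
  · rw [hweight c rfl, hweight d hend.symm, hr, mul_div_mul_right _ _ ht.ne']

end Paths

section Coding

lemma exists_determinesAt_of_codeLength_lt {A B : Type*} {D : Set (ℤ → A)}
    {φ : (ℤ → A) → (ℤ → B)} {x : ℤ → A} {K : ℕ} (h : codeLength D φ x < K) :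
    ∃ q r : ℕ, q + r < K ∧ DeterminesAt D φ q r x := by
  simp only [codeLength, iInf_lt_iff] at h
  obtain ⟨q, r, hdet, hlt⟩ := h
  exact ⟨q, r, by exact_mod_cast hlt, hdet⟩
variable {A B : Type*} [MeasurableSpace A] [MeasurableSpace B]
  {μ : Measure (ℤ → A)} {ν : Measure (ℤ → B)}
  {D : Set (ℤ → A)} {φ : (ℤ → A) → (ℤ → B)}

lemma IsFactorMap.shiftBy_natCast (hφ : IsFactorMap μ ν D φ) (n : ℕ) (x : ℤ → A) :
    (shiftBy n x ∈ D ↔ x ∈ D) ∧ (x ∈ D → φ (shiftBy n x) = shiftBy n (φ x)) := by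
  induction n with
  | zero => simp [shiftBy_zero]
  | succ n ih =>
    have hA : shiftBy ((n + 1 : ℕ) : ℤ) x = shift (shiftBy n x) := by
      funext i
      simp only [shiftBy, shift]
      congr 1; push_cast; ring
    have hB : shiftBy ((n + 1 : ℕ) : ℤ) (φ x) = shift (shiftBy n (φ x)) := by
      funext i
      simp only [shiftBy, shift]
      congr 1; push_cast; ring
    rw [hA, hB]
    refine ⟨?_, fun hx => ?_⟩
    · rw [← ih.1, ← Set.mem_preimage, hφ.dom_shift_invariant]
    · rw [hφ.equivariant _ (ih.1.2 hx), ih.2 hx]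

lemma IsFactorMap.shiftBy_mem (hφ : IsFactorMap μ ν D φ) (n : ℤ) {x : ℤ → A} (hx : x ∈ D) :
    shiftBy n x ∈ D := by
  obtain ⟨k, rfl | rfl⟩ := n.eq_nat_or_neg
  · exact (hφ.shiftBy_natCast k x).1.2 hx
  · rw [← (hφ.shiftBy_natCast k _).1, shiftBy_shiftBy]
    simpa [shiftBy_zero] using hx

lemma IsFactorMap.map_shiftBy (hφ : IsFactorMap μ ν D φ) (n : ℤ) {x : ℤ → A} (hx : x ∈ D) :
    φ (shiftBy n x) = shiftBy n (φ x) := by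
  obtain ⟨k, rfl | rfl⟩ := n.eq_nat_or_neg
  · exact (hφ.shiftBy_natCast k x).2 hx
  · have h := (hφ.shiftBy_natCast k _).2 (hφ.shiftBy_mem (-k) hx)
    rw [shiftBy_shiftBy] at h
    rw [add_neg_cancel, shiftBy_zero] at h
    rw [h, shiftBy_shiftBy, neg_add_cancel, shiftBy_zero]

/-- On the domain the code length coincides with a measurable function. -/
lemma aemeasurable_codeLength {A B : Type*} [MeasurableSpace A] [Finite A]
    [DiscreteMeasurableSpace A] {μ : Measure (ℤ → A)} {D : Set (ℤ → A)}
    {φ : (ℤ → A) → (ℤ → B)} (hD : ∀ᵐ x ∂μ, x ∈ D) :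
    AEMeasurable (codeLength D φ) μ := by
  classical
  let G (q r : ℕ) : Set (ℤ → A) :=
    {x | ∃ z ∈ D, (∀ i : ℤ, -(q : ℤ) ≤ i → i ≤ r → x i = z i) ∧ DeterminesAt D φ q r z}
  have hG : ∀ q r, MeasurableSet (G q r) := fun q r =>
    measurableSet_of_window (a := -(q : ℤ)) (b := r) fun x ⟨z, hz, hxz, hdet⟩ y hy =>
      ⟨z, hz, fun i h₁ h₂ => (hy i h₁ h₂).trans (hxz i h₁ h₂), hdet⟩
  have hiff : ∀ x ∈ D, ∀ q r, x ∈ G q r ↔ DeterminesAt D φ q r x := by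
    refine fun x hx q r => ⟨?_, fun h => ⟨x, hx, fun _ _ _ => rfl, h⟩⟩
    rintro ⟨z, hz, hxz, hdet⟩ y hy hyx
    rw [hdet x hx hxz, hdet y hy fun i h₁ h₂ => (hyx i h₁ h₂).trans (hxz i h₁ h₂)]
  refine ⟨fun x => ⨅ (q : ℕ) (r : ℕ), if x ∈ G q r then (q : ℝ≥0∞) + r else ⊤,
    .iInf fun q => .iInf fun r => .ite (hG q r) measurable_const measurable_const, ?_⟩
  filter_upwards [hD] with x hx
  simp only [codeLength]
  refine iInf_congr fun q => iInf_congr fun r => ?_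
  split_ifs with h <;> rw [hiff x hx] at h <;> simp [h]

/-- If `C` is integrable and the measure is preserved by every map in a sequence `T`, then almost
surely `C (T j x) + m` is eventually smaller than `j`. -/
lemma ae_eventually_add_lt {Ω : Type*} [MeasurableSpace Ω] {μ : Measure Ω} [IsProbabilityMeasure μ]
    {C : Ω → ℝ≥0∞} (hC : AEMeasurable C μ) (hfin : ∫⁻ x, C x ∂μ < ⊤) {T : ℕ → Ω → Ω}
    (hT : ∀ j, MeasurePreserving (T j) μ μ) (m : ℕ) :
    ∀ᵐ x ∂μ, ∀ᶠ j : ℕ in atTop, C (T j x) + m < j := by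
  let X : Ω → ℝ := fun x => (C x).toReal + (m + 1)
  have hX : Integrable X μ :=
    (integrable_toReal_of_lintegral_ne_top hC hfin.ne).add (integrable_const _)
  have hsum : ∑' j : ℕ, μ {x | X x ∈ Set.Ioi (j : ℝ)} < ⊤ :=
    letI : MeasureSpace Ω := ⟨μ⟩
    ProbabilityTheory.tsum_prob_mem_Ioi_lt_top hX fun x => by positivity
  have hpre : ∀ j : ℕ, μ {x | X (T j x) ∈ Set.Ioi (j : ℝ)} = μ {x | X x ∈ Set.Ioi (j : ℝ)} :=
    fun j => (hT j).measure_preimage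
      (hX.aestronglyMeasurable.aemeasurable.nullMeasurableSet_preimage measurableSet_Ioi)
  have hev := ae_eventually_notMem (μ := μ) (s := fun j : ℕ => {x | X (T j x) ∈ Set.Ioi (j : ℝ)})
    (by simpa only [hpre] using hsum.ne)
  have hfinite : ∀ᵐ x ∂μ, ∀ j, C (T j x) < ⊤ :=
    ae_all_iff.2 fun j => (hT j).quasiMeasurePreserving.ae (ae_lt_top' hC hfin.ne)
  filter_upwards [hev, hfinite] with x hx hxfin
  filter_upwards [hx] with j hj
  have hj' : (C (T j x)).toReal + (m + 1) ≤ j := not_lt.1 hj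
  rw [← ENNReal.toReal_lt_toReal (by simp [(hxfin j).ne]) (by simp),
    ENNReal.toReal_add (hxfin j).ne (by simp)]
  simp only [ENNReal.toReal_natCast]
  linarith

/-- Almost surely, changing coordinates in `[0, m]` affects only finitely many coordinates of the
image. -/
lemma IsFactorMap.ae_exists_forall_eq_of_window [Finite A] [DiscreteMeasurableSpace A]
    [IsProbabilityMeasure μ] (hφ : IsFactorMap μ ν D φ)
    (hshift : ∀ n : ℤ, MeasurePreserving (shiftBy n) μ μ)
    (hfin : ∫⁻ x, codeLength D φ x ∂μ < ⊤) (m : ℕ) :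
    ∀ᵐ x ∂μ, ∃ K : ℕ, ∀ y ∈ D, (∀ i : ℤ, i < 0 ∨ m < i → y i = x i) →
      ∀ i : ℤ, i ≤ -(K : ℤ) ∨ (K : ℤ) ≤ i → φ y i = φ x i := by
  have hD : ∀ᵐ x ∂μ, x ∈ D := (prob_compl_eq_zero_iff hφ.dom_measurable).2 hφ.dom_full
  have hC := aemeasurable_codeLength (φ := φ) hD
  filter_upwards [hD, ae_eventually_add_lt hC hfin (fun j : ℕ => hshift j) m,
    ae_eventually_add_lt hC hfin (fun j : ℕ => hshift (-j)) m] with x hx hpos hneg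
  obtain ⟨K, hK⟩ := eventually_atTop.1 (hpos.and hneg)
  have hlt : ∀ (n : ℤ) (j : ℕ), codeLength D φ (shiftBy n x) + m < j → ∃ q r : ℕ,
      q + r + m < j ∧ DeterminesAt D φ q r (shiftBy n x) := by
    intro n j h
    have hmj : m ≤ j := by exact_mod_cast (le_add_self.trans h.le)
    obtain ⟨q, r, hqr, hdet⟩ := exists_determinesAt_of_codeLength_lt (D := D) (φ := φ)
      (x := shiftBy n x) (K := j - m) (by
        rw [ENNReal.natCast_sub]; exact lt_tsub_iff_right.2 h)
    exact ⟨q, r, by lia, hdet⟩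
  have hcoord : ∀ (y : ℤ → A), y ∈ D → ∀ i, φ y i = φ (shiftBy i y) 0 := fun y hy i => by
    rw [hφ.map_shiftBy i hy, shiftBy, zero_add]
  refine ⟨K, fun y hy hxy i hi => ?_⟩
  rw [hcoord y hy, hcoord x hx]
  rcases hi with hi | hi
  · obtain ⟨q, r, hqr, hdet⟩ := hlt i i.natAbs (by
      have := (hK i.natAbs (by lia)).2
      rwa [show -(i.natAbs : ℤ) = i by lia] at this)
    exact hdet _ (hφ.shiftBy_mem i hy) fun l h₁ h₂ => hxy _ (by lia)
  · obtain ⟨q, r, hqr, hdet⟩ := hlt i i.natAbs (by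
      have := (hK i.natAbs (by lia)).1
      rwa [show (i.natAbs : ℤ) = i by lia] at this)
    exact hdet _ (hφ.shiftBy_mem i hy) fun l h₁ h₂ => hxy _ (by lia)

end Coding

section Invariance

variable {S₁ S₂ : Type*} [Fintype S₁] [Fintype S₂]
  [MeasurableSpace S₁] [DiscreteMeasurableSpace S₁]
  [MeasurableSpace S₂] [DiscreteMeasurableSpace S₂]
  {P : Matrix S₁ S₁ ℝ} {ppi₁ : S₁ → ℝ} {μ : Measure (ℤ → S₁)}
  {Q : Matrix S₂ S₂ ℝ} {ppi₂ : S₂ → ℝ} {ν : Measure (ℤ → S₂)}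
  {D : Set (ℤ → S₁)} {E : Set (ℤ → S₂)} {φ : (ℤ → S₁) → (ℤ → S₂)} {ψ : (ℤ → S₂) → (ℤ → S₁)}

/-- If an isomorphism conjugates the exchange of two words to the exchange of two words on a set
of positive measure, then both exchanges have the same weight ratio. -/
lemma pathWeight_ratio_eq (hP : ∀ i j, 0 ≤ P i j) (hppi₁ : IsStationaryVector P ppi₁)
    (hμ : IsMarkovMeasure μ P ppi₁) (hQ : ∀ i j, 0 ≤ Q i j) (hppi₂ : IsStationaryVector Q ppi₂)
    (hν : IsMarkovMeasure ν Q ppi₂) (hφ : IsFactorMap μ ν D φ) (hψ : IsFactorMap ν μ E ψ)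
    (hψφ : ∀ x ∈ D, φ x ∈ E ∧ ψ (φ x) = x) (hφψ : ∀ y ∈ E, ψ y ∈ D ∧ φ (ψ y) = y)
    {a b a' b' : ℤ} (hab : a ≤ b) (hab' : a' ≤ b') {u v : ℤ → S₁} {u' v' : ℤ → S₂}
    (ha : u a = v a) (hb : u b = v b) (ha' : u' a' = v' a') (hb' : u' b' = v' b')
    (hu : 0 < pathWeight P a b u) (hv : 0 < pathWeight P a b v)
    {M : Set (ℤ → S₁)} (hM : MeasurableSet M) (hM0 : μ M ≠ 0) (hMD : M ⊆ D)
    (hMu : M ⊆ cyl a b u) (hMv : ∀ x ∈ M, splice a b v x ∈ D)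
    (hMu' : ∀ x ∈ M, φ x ∈ cyl a' b' u')
    (hconj : ∀ x ∈ M, φ (splice a b v x) = splice a' b' v' (φ x)) :
    0 < pathWeight Q a' b' u' ∧ 0 < pathWeight Q a' b' v' ∧
      pathWeight P a b v / pathWeight P a b u = pathWeight Q a' b' v' / pathWeight Q a' b' u' := by
  have := hμ.isProbabilityMeasure hppi₁
  have hD : ∀ᵐ x ∂μ, x ∈ D := (prob_compl_eq_zero_iff hφ.dom_measurable).2 hφ.dom_full
  have hνφ : ∀ {A : Set (ℤ → S₂)}, MeasurableSet A → ν A = μ (φ ⁻¹' A) := fun hA => by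
    rw [hφ.pushforward, Measure.map_apply hφ.measurable_map hA]
  set B := ψ ⁻¹' M ∩ E
  have hBmeas : MeasurableSet B := (hψ.measurable_map hM).inter hψ.dom_measurable
  have hB : ∀ y ∈ B, ∃ x ∈ M, φ x = y := fun y hy => ⟨ψ y, hy.1, (hφψ y hy.2).2⟩
  have hMB : ∀ x ∈ M, φ x ∈ B := fun x hx => by
    obtain ⟨h₁, h₂⟩ := hψφ x (hMD hx)
    exact ⟨by rwa [Set.mem_preimage, h₂], h₁⟩
  have hinj : ∀ x ∈ D, ∀ y ∈ D, φ x = φ y → x = y := fun x hx y hy hxy => by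
    rw [← (hψφ x hx).2, hxy, (hψφ y hy).2]
  have hνB : ν B = μ M := by
    rw [hνφ hBmeas]
    refine measure_congr ?_
    filter_upwards [hD] with x hx
    refine propext ⟨fun h => ?_, fun h => hMB x h⟩
    have : ψ (φ x) ∈ M := h.1
    rwa [(hψφ x hx).2] at this
  have hBu' : B ⊆ cyl a' b' u' := fun y hy => by
    obtain ⟨x, hx, rfl⟩ := hB y hy
    exact hMu' x hx
  set N := cyl a b v ∩ splice a b u ⁻¹' M
  set N' := cyl a' b' v' ∩ splice a' b' u' ⁻¹' B
  have hNN' : ν N' = μ N := by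
    rw [hνφ ((measurableSet_cyl _ _ _).inter (measurable_splice _ _ _ hBmeas))]
    refine measure_congr ?_
    filter_upwards [hD] with y hy
    refine propext ⟨fun h => ?_, fun h => ?_⟩
    · obtain ⟨x, hx, hxy⟩ := hB _ h.2
      have hyx : y = splice a b v x := by
        refine hinj y hy _ (hMv x hx) ?_
        rw [hconj x hx, hxy, splice_splice_of_mem h.1]
      refine ⟨hyx ▸ splice_mem_cyl a b v x, ?_⟩
      rwa [Set.mem_preimage, hyx, splice_splice_of_mem (hMu hx)]
    · have hφy : φ y = splice a' b' v' (φ (splice a b u y)) := by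
        rw [← hconj _ h.2, splice_splice_of_mem h.1]
      refine ⟨?_, ?_⟩
      · rw [hφy]; exact splice_mem_cyl _ _ _ _
      · change splice a' b' u' (φ y) ∈ B
        rw [hφy, splice_splice_of_mem (hMu' _ h.2)]
        exact hMB _ h.2
  have hN : ENNReal.ofReal (pathWeight P a b u) * μ N =
      ENNReal.ofReal (pathWeight P a b v) * μ M := by
    have h := hμ.pathWeight_mul_measure_cyl_inter hppi₁ hP hab ha hb (measurable_splice a b u hM)
    rwa [show cyl a b u ∩ splice a b v ⁻¹' (splice a b u ⁻¹' M) = M from Set.ext fun x =>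
      ⟨fun hx => by simpa only [Set.mem_preimage, splice_splice_of_mem hx.1] using hx.2,
        fun hx => ⟨hMu hx, by
          simpa only [Set.mem_preimage, splice_splice_of_mem (hMu hx)] using hx⟩⟩] at h
  have hN' : ENNReal.ofReal (pathWeight Q a' b' u') * μ N =
      ENNReal.ofReal (pathWeight Q a' b' v') * μ M := by
    have h := hν.pathWeight_mul_measure_cyl_inter hppi₂ hQ hab' ha' hb'
      (measurable_splice a' b' u' hBmeas)
    rwa [show cyl a' b' u' ∩ splice a' b' v' ⁻¹' (splice a' b' u' ⁻¹' B) = B from Set.ext fun x =>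
      ⟨fun hx => by simpa only [Set.mem_preimage, splice_splice_of_mem hx.1] using hx.2,
        fun hx => ⟨hBu' hx, by
          simpa only [Set.mem_preimage, splice_splice_of_mem (hBu' hx)] using hx⟩⟩,
      hNN', hνB] at h
  have hu'0 := pathWeight_nonneg hQ a' b' u'
  have hv'0 := pathWeight_nonneg hQ a' b' v'
  have hcyl : ν (cyl a' b' u') ≠ 0 := fun h => hM0 (hνB ▸ measure_mono_null hBu' h)
  have hu' : 0 < pathWeight Q a' b' u' := by
    refine hu'0.lt_of_ne fun h => hcyl ?_
    rw [hν.measure_cyl hab', ← h, mul_zero, ENNReal.ofReal_zero]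
  have heq : pathWeight Q a' b' u' * pathWeight P a b v =
      pathWeight P a b u * pathWeight Q a' b' v' := by
    have h₁ : ENNReal.ofReal (pathWeight Q a' b' u' * pathWeight P a b v) * μ M =
        ENNReal.ofReal (pathWeight P a b u * pathWeight Q a' b' v') * μ M := by
      rw [ENNReal.ofReal_mul hu'0, ENNReal.ofReal_mul hu.le, mul_assoc, mul_assoc, ← hN, ← hN',
        mul_left_comm]
    exact (ENNReal.ofReal_eq_ofReal_iff (by positivity) (by positivity)).1
      ((ENNReal.mul_left_inj hM0 (measure_ne_top μ M)).1 h₁)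
  refine ⟨hu', pos_of_mul_pos_right (heq ▸ mul_pos hu' hv) hu.le, ?_⟩
  rw [div_eq_div_iff hu.ne' hu'.ne']
  linarith

lemma DeltaGroup_le_of_fect [DecidableEq S₁] [DecidableEq S₂] (hP : ∀ i j, 0 ≤ P i j)
    (hPprim : IsPrimitive P)
    (hppi₁ : IsStationaryVector P ppi₁) (hμ : IsMarkovMeasure μ P ppi₁)
    (hQ : ∀ i j, 0 ≤ Q i j) (hQprim : IsPrimitive Q) (hppi₂ : IsStationaryVector Q ppi₂)
    (hν : IsMarkovMeasure ν Q ppi₂) (hφ : IsFactorMap μ ν D φ) (hψ : IsFactorMap ν μ E ψ)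
    (hψφ : ∀ x ∈ D, φ x ∈ E ∧ ψ (φ x) = x) (hφψ : ∀ y ∈ E, ψ y ∈ D ∧ φ (ψ y) = y)
    (hfin : ∫⁻ x, codeLength D φ x ∂μ < ⊤) :
    DeltaGroup P ≤ DeltaGroup Q := by
  have := hμ.isProbabilityMeasure hppi₁
  have hD : ∀ᵐ x ∂μ, x ∈ D := (prob_compl_eq_zero_iff hφ.dom_measurable).2 hφ.dom_full
  refine (Subgroup.closure_le _).2 ?_
  rintro r ⟨n, c, d, hn, hc, hd, hcd, hcw, hdw, hr⟩
  -- `v` and `u` are the two cycles, placed on the window `[0, n]`.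
  let u : ℤ → S₁ := fun i => d i.toNat
  let v : ℤ → S₁ := fun i => c i.toNat
  have hwu : pathWeight P 0 n u = cycleWeight P n d := by
    simpa [u] using pathWeight_add_natCast P 0 n u
  have hwv : pathWeight P 0 n v = cycleWeight P n c := by
    simpa [v] using pathWeight_add_natCast P 0 n v
  have ha : u 0 = v 0 := hcd.symm
  have hb : u n = v n := by simp only [u, v, Int.toNat_natCast]; rw [hc, hd, hcd]
  have h0n : (0 : ℤ) ≤ n := by lia
  have hcyl : μ (cyl 0 n u) ≠ 0 := by
    rw [hμ.measure_cyl h0n, hwu]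
    exact (ENNReal.ofReal_pos.2 (mul_pos (hppi₁.pos hPprim _) hdw)).ne'
  have hsplice : ∀ᵐ x ∂μ, x ∈ cyl 0 n u → splice 0 n v x ∈ D := by
    have h := hμ.pathWeight_mul_measure_cyl_inter hppi₁ hP h0n ha hb hφ.dom_measurable.compl
    have hDc : μ Dᶜ = 0 := hD
    rw [measure_mono_null Set.inter_subset_right hDc, mul_zero, hwv, eq_comm, mul_eq_zero,
      or_iff_right (ENNReal.ofReal_pos.2 hcw).ne'] at h
    filter_upwards [measure_eq_zero_iff_ae_notMem.1 h] with x hx hxu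
    by_contra hxD
    exact hx ⟨hxu, hxD⟩
  let J (k : ℕ) : Finset ℤ := Finset.Icc (-((k + 1 : ℕ) : ℤ)) (k + 1 : ℕ)
  let M (t : Σ k : ℕ, (J k → S₂) × (J k → S₂)) : Set (ℤ → S₁) :=
    {x | x ∈ cyl 0 n u ∧ x ∈ D ∧ splice 0 n v x ∈ D ∧ (J t.1).restrict (φ x) = t.2.1 ∧
      (J t.1).restrict (φ (splice 0 n v x)) = t.2.2 ∧
      ∀ i : ℤ, i ≤ -((t.1 + 1 : ℕ) : ℤ) ∨ ((t.1 + 1 : ℕ) : ℤ) ≤ i →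
        φ (splice 0 n v x) i = φ x i}
  have hMmeas : ∀ t, MeasurableSet (M t) := by
    intro t
    have hs := measurable_splice 0 (n : ℤ) v
    have htail : MeasurableSet {x | ∀ i : ℤ, i ≤ -((t.1 + 1 : ℕ) : ℤ) ∨ ((t.1 + 1 : ℕ) : ℤ) ≤ i →
        φ (splice 0 n v x) i = φ x i} := by
      simp only [Set.ofPred_forall]
      refine .iInter fun i => .iInter fun _ => measurableSet_eq_fun ?_ ?_
      · exact (measurable_pi_apply i).comp (hφ.measurable_map.comp hs)
      · exact (measurable_pi_apply i).comp hφ.measurable_map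
    exact (measurableSet_cyl _ _ _).inter <| hφ.dom_measurable.inter <|
      (hs hφ.dom_measurable).inter <|
      (((Finset.measurable_restrict _).comp hφ.measurable_map)
        (measurableSet_singleton t.2.1)).inter <|
      (((Finset.measurable_restrict _).comp (hφ.measurable_map.comp hs))
        (measurableSet_singleton t.2.2)).inter htail
  obtain ⟨t, ht⟩ : ∃ t, μ (M t) ≠ 0 := by
    by_contra! hnull
    refine hcyl (measure_mono_null_ae ?_ (measure_iUnion_null hnull))
    filter_upwards [hD, hsplice, hφ.ae_exists_forall_eq_of_window
      (hμ.measurePreserving_shiftBy hppi₁) hfin n] with x hx hxs ⟨K, hK⟩ hxu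
    refine Set.mem_iUnion.2 ⟨⟨K, (J K).restrict (φ x), (J K).restrict (φ (splice 0 n v x))⟩, hxu,
      hx, hxs hxu, rfl, rfl, fun i hi => ?_⟩
    refine hK _ (hxs hxu) (fun i hi => ?_) i (by lia)
    rw [splice, if_neg (by lia)]
  obtain ⟨x₀, hx₀⟩ := nonempty_of_measure_ne_zero ht
  obtain ⟨k, w, w'⟩ := t
  have hcoord : ∀ {y z : ℤ → S₂}, (J k).restrict y = (J k).restrict z →
      y ∈ cyl (-((k + 1 : ℕ) : ℤ)) (k + 1 : ℕ) z := fun h i h₁ h₂ =>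
    congrFun h ⟨i, Finset.mem_Icc.2 ⟨h₁, h₂⟩⟩
  have hends := hx₀.2.2.2.2.2
  obtain ⟨hu', hv', hratio⟩ := pathWeight_ratio_eq hP hppi₁ hμ hQ hppi₂ hν hφ hψ hψφ hφψ h0n
    (a' := -((k + 1 : ℕ) : ℤ)) (b' := (k + 1 : ℕ)) (u' := φ x₀) (v' := φ (splice 0 n v x₀))
    (by lia) ha hb (hends _ (.inl le_rfl)).symm (hends _ (.inr le_rfl)).symm
    (hwu ▸ hdw) (hwv ▸ hcw) (hMmeas _) ht (fun x hx => hx.2.1) (fun x hx => hx.1)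
    (fun x hx => hx.2.2.1) (fun x hx => hcoord (hx.2.2.2.1.trans hx₀.2.2.2.1.symm))
    (fun x hx => by
      funext i
      by_cases hi : -((k + 1 : ℕ) : ℤ) ≤ i ∧ i ≤ (k + 1 : ℕ)
      · rw [splice, if_pos hi]
        exact hcoord (hx.2.2.2.2.1.trans hx₀.2.2.2.2.1.symm) i hi.1 hi.2
      · rw [splice, if_neg hi]
        exact hx.2.2.2.2.2 i (by lia))
  have hpath : ∀ y : ℤ → S₂, pathWeight Q (-((k + 1 : ℕ) : ℤ)) (k + 1 : ℕ) y =
      cycleWeight Q (2 * (k + 1)) fun i => y (-((k + 1 : ℕ) : ℤ) + i) := fun y => by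
    rw [← pathWeight_add_natCast]
    congr 1
    push_cast; ring
  rw [hpath] at hu' hv'
  rw [hpath, hpath, hwu, hwv, ← hr] at hratio
  exact mem_DeltaGroup_of_paths hQ hQprim (by lia) (hends _ (by simp)) (hends _ (by lia)) hv' hu'
    hratio

end Invariance

/-- **Krieger.** If the mixing Markov shifts of `P` and `Q` are finitarily isomorphic with
finite expected code times, then `Δ_P = Δ_Q`. -/
theorem delta_eq_of_fect
    {S₁ S₂ : Type*} [Fintype S₁] [DecidableEq S₁] [Fintype S₂] [DecidableEq S₂]
    [MeasurableSpace S₁] [DiscreteMeasurableSpace S₁]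
    [MeasurableSpace S₂] [DiscreteMeasurableSpace S₂]
    (P : Matrix S₁ S₁ ℝ) (hPstoch : IsStochastic P) (hPprim : IsPrimitive P)
    (ppi₁ : S₁ → ℝ) (hppi₁ : IsStationaryVector P ppi₁)
    (μ : Measure (ℤ → S₁)) (hμ : IsMarkovMeasure μ P ppi₁)
    (Q : Matrix S₂ S₂ ℝ) (hQstoch : IsStochastic Q) (hQprim : IsPrimitive Q)
    (ppi₂ : S₂ → ℝ) (hppi₂ : IsStationaryVector Q ppi₂)
    (ν : Measure (ℤ → S₂)) (hν : IsMarkovMeasure ν Q ppi₂)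
    (hfect : FinitarilyIsomorphicFect μ ν) :
    DeltaGroup (S := S₁) P = DeltaGroup (S := S₂) Q := by
  obtain ⟨D, E, φ, ψ, ⟨hφ, hψ, -, -, hψφ, hφψ⟩, hfinφ, hfinψ⟩ := hfect
  exact le_antisymm
    (DeltaGroup_le_of_fect hPstoch.1 hPprim hppi₁ hμ hQstoch.1 hQprim hppi₂ hν hφ hψ hψφ hφψ hfinφ)
    (DeltaGroup_le_of_fect hQstoch.1 hQprim hppi₂ hν hPstoch.1 hPprim hppi₁ hμ hψ hφ hφψ hψφ hfinψ)
end
end
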